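/- Let T be the diagonal maximal torus of SL_2 acting on the space V_n of binary forms of degree n over a field of characteristic 0. Then the cardinality of a minimal generating set of k[V_n]^T is O(n·e^{6√n log 2n}) for odd n, and O(n·e^{12√(n/2) log n}) for even n. -/

import Mathlib

open MvPolynomial

variable (k : Type) [Field k]

/-- The action of `t ∈ k* = 𝔾ₘ` on a polynomial ring in which the variable `x_i` has
weight `w i`: the substitution `x_i ↦ t^{w i} x_i`. -/
noncomputable def torusAct {ι : Type} (w : ι → ℤ) (t : kˣ) :
    MvPolynomial ι k →ₐ[k] MvPolynomial ι k :=
  aeval (fun i => ((t ^ w i : kˣ) : k) • X i)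

/-- The ring of invariants of the torus `k*` acting on a polynomial ring with the
variable `x_i` of weight `w i`. -/
noncomputable def torusInv {ι : Type} (w : ι → ℤ) : Subalgebra k (MvPolynomial ι k) where
  carrier := {p | ∀ t : kˣ, torusAct k w t p = p}
  mul_mem' := by intro a b ha hb t; rw [map_mul, ha t, hb t]
  add_mem' := by intro a b ha hb t; rw [map_add, ha t, hb t]
  algebraMap_mem' := by intro r t; exact (torusAct k w t).commutes r

/-- The minimal cardinality of a (finite) generating set of a subalgebra. -/
noncomputable def minGens {R : Type} [CommRing R] [Algebra k R] (A : Subalgebra k R) : ℕ :=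
  sInf {c : ℕ | ∃ S : Finset R, S.card = c ∧ Algebra.adjoin k (S : Set R) = A}

/-- The weight function for the variables `x_1, …, x_n, x_{-n}`: the variable `x_i`
(encoded `some i`) has weight `i + 1 ∈ {1, …, n}`, and `x_{-n}` (encoded `none`) has
weight `-n`. -/
def wOpt (n : ℕ) : Option (Fin n) → ℤ :=
  fun o => Option.elim o (-(n : ℤ)) (fun i => (i : ℤ) + 1)

/-- The weight function for the coordinates `a_i` of a binary form of degree `n` under
the diagonal maximal torus `T = {diag(t, t⁻¹)}` of `SL₂`: the `j`-th coordinate has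
weight `n - 2j`, so the weights range over `{-n, -n+2, …, n-2, n}`. -/
def wBin (n : ℕ) : Fin (n + 1) → ℤ := fun j => (n : ℤ) - 2 * j

/-!
The torus multiplies a monomial by a power of `t` whose exponent is the weight of the monomial.
Hence the invariants are generated by the indecomposable monomials of weight zero, and separating
positive from negative weights turns such a monomial into a primitive partition identity
`∑ P = ∑ Q` with parts at most `n`.

To count these identities, cut each side into quarters. A quarter `V` of `Q` is so small that none
of its sub-sums is a sub-sum of `P`. Choose parts of `V` greedily, each of which substantially
enlarges a set `D` of differences of sub-sums of `P` and of the chosen parts, modulo a number of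
size about `n`; this stops after few choices. By the separation of `V` from `P` the remaining
parts lie outside `D`, and they are almost periods of `D`; by Olson's averaging argument there are
few almost periods outside `D`, provided that the remaining parts generate `ℤ`. This is arranged
by discarding a few parts and dividing the others by their gcd `d`, while the Erdős–Ginzburg–Ziv
theorem replaces almost all of `P` by multiples of `d`. So all but about `√n / 2` parts of `V` lie
in one of few small sets, the containers. The exceptional parts contribute `exp (√n log n / 2)`
possibilities and everything else contributes `exp (o(√n log n))`. A quarter thus has at most
`exp (3/4 √n log n)` possible values, and the eight quarters of `P` and `Q` together have at most
`exp (6 √n log n)`.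
-/

open scoped Finset Pointwise

section TranslateDefect

variable {G : Type*} [AddCommGroup G] [DecidableEq G]

/-- Olson's function `λ_D(x) = |D \ (D + x)|`, which measures how far `D` is from being invariant
under translation by `x`. -/
def translateDefect (D : Finset G) (x : G) : ℕ := #{s ∈ D | s - x ∉ D}

lemma translateDefect_add_card_filter (D : Finset G) (x : G) :
    translateDefect D x + #{s ∈ D | s - x ∈ D} = #D := by
  rw [add_comm]
  exact Finset.card_filter_add_card_filter_not (s := D) (fun s => s - x ∈ D)

lemma card_union_image_sub (D : Finset G) (x : G) :
    #(D ∪ D.image (· - x)) = #D + translateDefect D x := by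
  have hdefect : translateDefect D x = #(D.image (· - x) \ D) := by
    rw [← Finset.filter_notMem_eq_sdiff, Finset.filter_image,
      Finset.card_image_of_injective _ (sub_left_injective (b := x))]
    rfl
  rw [hdefect, ← Finset.union_sdiff_self_eq_union,
    Finset.card_union_of_disjoint Finset.disjoint_sdiff]

lemma translateDefect_zero (D : Finset G) : translateDefect D 0 = 0 := by
  simp [translateDefect]

lemma translateDefect_add_le (D : Finset G) (x y : G) :
    translateDefect D (x + y) ≤ translateDefect D x + translateDefect D y := by
  have hsub : {s ∈ D | s - (x + y) ∉ D} ⊆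
      {s ∈ D | s - x ∉ D} ∪ {s ∈ D | s - y ∉ D}.image (· + x) := by
    intro s hs
    simp only [Finset.mem_filter, Finset.mem_union, Finset.mem_image] at hs ⊢
    by_cases hx : s - x ∈ D
    · exact Or.inr ⟨s - x, ⟨hx, by rw [sub_sub]; exact hs.2⟩, sub_add_cancel s x⟩
    · exact Or.inl ⟨hs.1, hx⟩
  calc translateDefect D (x + y) ≤ _ := Finset.card_le_card hsub
    _ ≤ _ := Finset.card_union_le _ _
    _ ≤ _ := Nat.add_le_add_left Finset.card_image_le _

lemma translateDefect_neg (D : Finset G) (x : G) :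
    translateDefect D (-x) = translateDefect D x := by
  have hcard : #{s ∈ D | s - x ∈ D} = #{s ∈ D | s - -x ∈ D} :=
    Finset.card_nbij' (· - x) (· + x) (by simp +contextual [Set.MapsTo])
      (by simp +contextual [Set.MapsTo]) (by simp [Set.LeftInvOn]) (by simp [Set.LeftInvOn])
  have hx := translateDefect_add_card_filter D x
  have hneg := translateDefect_add_card_filter D (-x)
  lia

lemma translateDefect_compl [Fintype G] (D : Finset G) (x : G) :
    translateDefect Dᶜ x = translateDefect D x := by
  rw [← translateDefect_neg D]
  exact Finset.card_nbij' (· - x) (· + x) (by simp +contextual [Set.MapsTo])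
    (by simp +contextual [Set.MapsTo]) (by simp [Set.LeftInvOn]) (by simp [Set.LeftInvOn])

lemma card_mul_card_le_sum_translateDefect (D C : Finset G) :
    #C * #D ≤ ∑ c ∈ C, translateDefect D c + #D ^ 2 := by
  have hpairs : ∑ c ∈ C, #{s ∈ D | s - c ∈ D} ≤ #D ^ 2 := by
    simp only [Finset.card_filter]
    rw [Finset.sum_comm, pow_two, ← smul_eq_mul]
    refine Finset.sum_le_card_nsmul _ _ _ fun s _ => ?_
    rw [← Finset.card_filter]
    exact Finset.card_le_card_of_injOn (s - ·) (by simp [Set.MapsTo])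
      (sub_right_injective (b := s)).injOn
  have hsplit : #C * #D = ∑ c ∈ C, translateDefect D c + ∑ c ∈ C, #{s ∈ D | s - c ∈ D} := by
    simp [← Finset.sum_add_distrib, translateDefect_add_card_filter]
  lia

lemma translateDefect_le_of_mem_nsmul {D S : Finset G} {g : ℕ}
    (hS : ∀ x ∈ S, translateDefect D x ≤ g) (m : ℕ) :
    ∀ x ∈ m • S, translateDefect D x ≤ m * g := by
  induction m with
  | zero => simp [translateDefect_zero]
  | succ m ih =>
    intro x hx
    rw [succ_nsmul] at hx
    obtain ⟨y, hy, s, hs, rfl⟩ := Finset.mem_add.1 hx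
    calc translateDefect D (y + s) ≤ translateDefect D y + translateDefect D s :=
          translateDefect_add_le D y s
      _ ≤ m * g + g := Nat.add_le_add (ih y hy) (hS s hs)
      _ = (m + 1) * g := by ring

lemma nsmul_eq_univ_or_mul_card_le [Fintype G] {S : Finset G} (h0 : 0 ∈ S)
    (hneg : ∀ x ∈ S, -x ∈ S) (hgen : AddSubgroup.closure (S : Set G) = ⊤) (i : ℕ) :
    (3 * i + 1) • S = Finset.univ ∨ (i + 1) * #S ≤ #((3 * i + 1) • S) := by
  have hmono : Monotone fun m : ℕ => m • S := Finset.nsmul_right_monotone h0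
  induction i with
  | zero => simp
  | succ i ih =>
    refine or_iff_not_imp_left.2 fun hne => ?_
    have hne_univ : ∀ m ≤ 3 * i + 4, m • S ≠ Finset.univ := fun m hm h =>
      hne (Finset.univ_subset_iff.1 (h ▸ hmono hm))
    have hnontriv : S.Nontrivial := by
      refine (Finset.eq_singleton_or_nontrivial h0).resolve_left fun hS => hne_univ 0 (by lia) ?_
      rw [zero_nsmul, ← Finset.coe_eq_univ, ← AddSubgroup.coe_top, ← hgen, hS,
        Finset.coe_singleton, AddSubgroup.closure_singleton_zero,
        Finset.coe_zero, AddSubgroup.coe_bot, Set.singleton_zero]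
    obtain ⟨z, hz, hz'⟩ := Finset.exists_of_ssubset <|
      Finset.nsmul_ssubset_nsmul_succ_of_nsmul_ne_closure (n := 3 * i + 2) h0 hnontriv (by
        rw [hgen, AddSubgroup.coe_top]
        exact_mod_cast hne_univ _ (by lia))
    have hdisj : Disjoint ((3 * i + 1) • S) (S.image (z + ·)) := by
      rw [Finset.disjoint_right]
      intro x hx hx'
      obtain ⟨s, hs, rfl⟩ := Finset.mem_image.1 hx
      refine hz' ?_
      rw [succ_nsmul]
      exact Finset.mem_add.2 ⟨z + s, hx', -s, hneg s hs, by abel⟩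
    have hsub : (3 * i + 1) • S ∪ S.image (z + ·) ⊆ (3 * (i + 1) + 1) • S := by
      refine Finset.union_subset (hmono (by lia)) (Finset.image_subset_iff.2 fun s hs => ?_)
      rw [succ_nsmul _ (3 * (i + 1))]
      exact Finset.add_mem_add hz hs
    calc (i + 1 + 1) * #S = (i + 1) * #S + #S := by ring
      _ ≤ #((3 * i + 1) • S) + #(S.image (z + ·)) := by
          rw [Finset.card_image_of_injective _ (add_right_injective z)]
          exact Nat.add_le_add_right (ih.resolve_left (hne_univ _ (by lia))) _
      _ = #((3 * i + 1) • S ∪ S.image (z + ·)) := (Finset.card_union_of_disjoint hdisj).symm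
      _ ≤ _ := Finset.card_le_card hsub

/-- Averaging `λ_D` over a set of size `2|D|` inside `m • S` gives `|D| ≤ 2mg`, while the linear
growth of `m • S` lets one take `m` about `6|D|/|S|`. -/
lemma card_le_of_translateDefect_le_of_symm [Fintype G] {D S : Finset G} {g : ℕ} (h0 : 0 ∈ S)
    (hneg : ∀ x ∈ S, -x ∈ S) (hgen : AddSubgroup.closure (S : Set G) = ⊤) (hD : D.Nonempty)
    (hcard : 2 * #D ≤ Fintype.card G) (hS : ∀ x ∈ S, translateDefect D x ≤ g)
    (hg : 4 * g ≤ #D) : #S ≤ 24 * g := by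
  by_contra! hlt
  have hSpos : 0 < #S := by lia
  have hDpos : 0 < #D := hD.card_pos
  set i := 2 * #D / #S
  have hlarge : 2 * #D ≤ #((3 * i + 1) • S) := by
    rcases nsmul_eq_univ_or_mul_card_le h0 hneg hgen i with h | h
    · rwa [h, Finset.card_univ]
    · have := Nat.lt_mul_div_succ (2 * #D) hSpos
      rw [mul_comm] at this
      lia
  obtain ⟨C, hC, hCcard⟩ := Finset.exists_subset_card_eq hlarge
  have hsum : ∑ c ∈ C, translateDefect D c ≤ #C * ((3 * i + 1) * g) :=
    Finset.sum_le_card_nsmul _ _ _ fun c hc => translateDefect_le_of_mem_nsmul hS _ c (hC hc)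
  have havg := card_mul_card_le_sum_translateDefect D C
  rw [hCcard] at hsum havg
  have hDle : #D ≤ 2 * ((3 * i + 1) * g) := by
    refine Nat.le_of_mul_le_mul_left ?_ hDpos
    nlinarith
  have hiS : i * #S ≤ 2 * #D := Nat.div_mul_le_self _ _
  rcases Nat.eq_zero_or_pos (i * g) with h | h
  · rcases Nat.mul_eq_zero.1 h with h | h <;> simp only [h] at hDle hg <;> lia
  · have := Nat.mul_lt_mul_of_pos_left hlt (Nat.pos_of_mul_pos_right h)
    nlinarith

theorem card_le_of_translateDefect_le [Finite G] {D E : Finset G} {g : ℕ}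
    (hgen : AddSubgroup.closure (E : Set G) = ⊤) (hD : D.Nonempty)
    (hE : ∀ x ∈ E, translateDefect D x ≤ g) (hdisj : Disjoint E D) (hg : 4 * g ≤ #D) :
    #E ≤ 24 * g := by
  cases nonempty_fintype G
  set S : Finset G := insert 0 (E ∪ -E) with hS
  have hES : E ⊆ S := fun x hx => by simp [hS, hx]
  have hgenS : AddSubgroup.closure (S : Set G) = ⊤ :=
    top_le_iff.1 (hgen ▸ AddSubgroup.closure_mono (by exact_mod_cast hES))
  have hneg : ∀ x ∈ S, -x ∈ S := by simp [hS, or_comm]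
  have hdefect : ∀ x ∈ S, translateDefect D x ≤ g := by
    intro x hx
    simp only [hS, Finset.mem_insert, Finset.mem_union, Finset.mem_neg'] at hx
    rcases hx with rfl | hx | hx
    · simp [translateDefect_zero]
    · exact hE x hx
    · rw [← translateDefect_neg]; exact hE _ hx
  rcases le_total (2 * #D) (Fintype.card G) with h | h
  · exact (Finset.card_le_card hES).trans <|
      card_le_of_translateDefect_le_of_symm (by simp [hS]) hneg hgenS hD h hdefect hg
  · have hcompl := Finset.card_add_card_compl D
    by_contra! hlt
    have hEcompl : #E ≤ #Dᶜ := Finset.card_le_card fun x hx =>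
      Finset.mem_compl.2 (Finset.disjoint_left.1 hdisj hx)
    have hSle : #S ≤ 24 * g := card_le_of_translateDefect_le_of_symm (D := Dᶜ) (by simp [hS]) hneg
      hgenS (Finset.card_pos.1 (by lia)) (by lia)
      (by simpa only [translateDefect_compl] using hdefect) (by lia)
    exact absurd ((Finset.card_le_card hES).trans hSle) (by lia)

end TranslateDefect

section SubSums

/-- Every sub-sum of `C` is a sub-sum of `P`, as happens when `C` is obtained from `P` by deleting
parts and merging the others into blocks. -/
def IsCoarsening (C P : Multiset ℕ) : Prop := ∀ C₁ ≤ C, ∃ P₁ ≤ P, P₁.sum = C₁.sum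

/-- No nonempty sub-multiset of `V` has the same sum as a sub-multiset of `C`. -/
def SumSeparated (C V : Multiset ℕ) : Prop := ∀ C₁ ≤ C, ∀ V₁ ≤ V, C₁.sum = V₁.sum → V₁ = 0

lemma exists_le_map_eq {α β : Type*} (f : α → β) {s : Multiset α} {t : Multiset β}
    (h : t ≤ s.map f) : ∃ u ≤ s, u.map f = t := by
  induction s using Multiset.induction_on generalizing t with
  | empty => exact ⟨0, le_rfl, (Multiset.le_zero.1 h).symm⟩
  | cons a s ih =>
    rw [Multiset.map_cons] at h
    by_cases ha : f a ∈ t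
    · obtain ⟨t, rfl⟩ := Multiset.exists_cons_of_mem ha
      obtain ⟨u, hu, rfl⟩ := ih ((Multiset.cons_le_cons_iff _).1 h)
      exact ⟨a ::ₘ u, Multiset.cons_le_cons _ hu, Multiset.map_cons ..⟩
    · obtain ⟨u, hu, rfl⟩ := ih ((Multiset.le_cons_of_notMem ha).1 h)
      exact ⟨u, hu.trans (Multiset.le_cons_self _ _), rfl⟩

lemma sum_map_const_mul (d : ℕ) (s : Multiset ℕ) : (s.map (d * ·)).sum = d * s.sum := by
  rw [Multiset.sum_map_mul_left, Multiset.map_id']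

namespace IsCoarsening

variable {C D P Q : Multiset ℕ}

lemma refl (P : Multiset ℕ) : IsCoarsening P P := fun C₁ h => ⟨C₁, h, rfl⟩

lemma singleton_sum (P : Multiset ℕ) : IsCoarsening {P.sum} P := by
  intro C₁ hC₁
  rcases Multiset.le_singleton.1 hC₁ with rfl | rfl
  exacts [⟨0, Multiset.zero_le _, rfl⟩, ⟨P, le_rfl, by simp⟩]

lemma add (hCP : IsCoarsening C P) (hDQ : IsCoarsening D Q) : IsCoarsening (C + D) (P + Q) := by
  intro E hE
  obtain ⟨P₁, hP₁, hP⟩ := hCP (E ∩ C) Multiset.inter_le_right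
  obtain ⟨Q₁, hQ₁, hQ⟩ := hDQ (E - C) (Multiset.sub_le_iff_le_add'.2 hE)
  exact ⟨P₁ + Q₁, add_le_add hP₁ hQ₁, by
    rw [Multiset.sum_add, hP, hQ, ← Multiset.sum_add, add_comm, Multiset.sub_add_inter]⟩

lemma mono_right (hCP : IsCoarsening C P) (hPQ : P ≤ Q) : IsCoarsening C Q := fun C₁ hC₁ =>
  let ⟨P₁, hP₁, h⟩ := hCP C₁ hC₁
  ⟨P₁, hP₁.trans hPQ, h⟩

end IsCoarsening

lemma SumSeparated.of_isCoarsening {C P V : Multiset ℕ} (h : SumSeparated P V)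
    (hC : IsCoarsening C P) : SumSeparated C V := by
  intro C₁ hC₁ V₁ hV₁ heq
  obtain ⟨P₁, hP₁, hP⟩ := hC C₁ hC₁
  exact h P₁ hP₁ V₁ hV₁ (hP.trans heq)

lemma SumSeparated.of_map_mul {C V : Multiset ℕ} {d : ℕ}
    (h : SumSeparated (C.map (d * ·)) (V.map (d * ·))) : SumSeparated C V := by
  intro C₁ hC₁ V₁ hV₁ heq
  refine Multiset.map_eq_zero.1 (h _ (Multiset.map_le_map hC₁) _ (Multiset.map_le_map hV₁) ?_)
  simp only [sum_map_const_mul, heq]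

lemma exists_le_card_eq_dvd_sum {d : ℕ} {P : Multiset ℕ} (hcard : 2 * d - 1 ≤ P.card) :
    ∃ R ≤ P, R.card = d ∧ d ∣ R.sum := by
  obtain ⟨R', hR', hRcard, hdvd⟩ :=
    Int.erdos_ginzburg_ziv_multiset (n := d) (P.map (Nat.cast : ℕ → ℤ)) (by simpa using hcard)
  obtain ⟨R, hR, rfl⟩ := exists_le_map_eq _ hR'
  refine ⟨R, hR, by simpa using hRcard, ?_⟩
  rwa [← Nat.cast_multiset_sum, Int.natCast_dvd_natCast] at hdvd

/-- As long as `2d - 1` parts are left, the Erdős–Ginzburg–Ziv theorem finds `d` of them whose sum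
is divisible by `d`; the quotient of that sum by `d` is again at most `n`. -/
lemma exists_isCoarsening_map_mul {n d : ℕ} (hd : 0 < d) (P : Multiset ℕ) (hP : ∀ p ∈ P, p ≤ n) :
    ∃ C : Multiset ℕ, (∀ c ∈ C, c ≤ n) ∧ IsCoarsening (C.map (d * ·)) P ∧
      P.sum ≤ d * C.sum + 2 * d * n := by
  induction P using Multiset.strongInductionOn with
  | ih P ih =>
    rcases lt_or_ge P.card (2 * d - 1) with hsmall | hlarge
    · refine ⟨0, by simp, (IsCoarsening.refl 0).mono_right (Multiset.zero_le P), ?_⟩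
      calc P.sum ≤ P.card * n := Multiset.sum_le_card_nsmul P n hP
        _ ≤ 2 * d * n := Nat.mul_le_mul_right n (by lia)
        _ = d * (0 : Multiset ℕ).sum + 2 * d * n := by simp
    obtain ⟨R, hRP, hRcard, q, hq⟩ := exists_le_card_eq_dvd_sum hlarge
    obtain ⟨P', rfl⟩ := Multiset.le_iff_exists_add.1 hRP
    have hlt : P' < R + P' := by
      refine lt_of_le_of_ne (Multiset.le_add_left _ _) fun h => ?_
      have := congrArg Multiset.card h
      rw [Multiset.card_add] at this
      lia
    obtain ⟨C, hCn, hC, hsum⟩ := ih P' hlt fun p hp => hP p (Multiset.mem_add.2 (Or.inr hp))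
    have hqn : q ≤ n := by
      refine Nat.le_of_mul_le_mul_left ?_ hd
      calc d * q = R.sum := hq.symm
        _ ≤ R.card * n := Multiset.sum_le_card_nsmul R n fun p hp =>
            hP p (Multiset.mem_add.2 (Or.inl hp))
        _ = d * n := by rw [hRcard]
    refine ⟨{q} + C, by simpa [hqn] using hCn, ?_, ?_⟩
    · rw [Multiset.map_add, Multiset.map_singleton, ← hq]
      exact (IsCoarsening.singleton_sum R).add hC
    · simp only [Multiset.sum_add, Multiset.sum_singleton, mul_add, hq]
      lia

/-- The sum of the parts not yet used stays below `m`: as soon as it reaches `m`, these parts form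
a new block. -/
lemma exists_isCoarsening_blocks {n m : ℕ} (P : Multiset ℕ) (hP : ∀ p ∈ P, p ≤ n) :
    ∃ C : Multiset ℕ, (∀ c ∈ C, m ≤ c ∧ c ≤ m + n) ∧ IsCoarsening C P ∧ P.sum ≤ C.sum + m := by
  suffices ∃ C P₁ P₂ : Multiset ℕ, P = P₁ + P₂ ∧ (∀ c ∈ C, m ≤ c ∧ c ≤ m + n) ∧
      IsCoarsening C P₁ ∧ P₁.sum = C.sum ∧ P₂.sum ≤ m by
    obtain ⟨C, P₁, P₂, rfl, hCm, hC, hsum, hrest⟩ := this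
    exact ⟨C, hCm, hC.mono_right (Multiset.le_add_right _ _), by rw [Multiset.sum_add]; lia⟩
  induction P using Multiset.induction_on with
  | empty => exact ⟨0, 0, 0, rfl, by simp, IsCoarsening.refl 0, rfl, by simp⟩
  | cons p P ih =>
    obtain ⟨C, P₁, P₂, rfl, hCm, hC, hsum, hrest⟩ :=
      ih fun q hq => hP q (Multiset.mem_cons_of_mem hq)
    have hpn : p ≤ n := hP p (Multiset.mem_cons_self _ _)
    rcases le_total (p + P₂.sum) m with hle | hge
    · exact ⟨C, P₁, p ::ₘ P₂, by simp, hCm, hC, hsum, by simpa using hle⟩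
    · refine ⟨{(p ::ₘ P₂).sum} + C, (p ::ₘ P₂) + P₁, 0, ?_, ?_,
        (IsCoarsening.singleton_sum _).add hC, by simp [hsum, add_assoc], by simp⟩
      · simp [add_comm]
      · simp only [Multiset.mem_add, Multiset.mem_singleton, forall_eq_or_imp, Multiset.sum_cons]
        exact ⟨by lia, hCm⟩

end SubSums

section PrimitiveIdentity

/-- `P` and `Q` are the two sides of a primitive partition identity: they have equal sums, and no
proper nonempty sub-multiset of one side has the same sum as a sub-multiset of the other. -/
def IsPrimitiveIdentity (P Q : Multiset ℕ) : Prop :=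
  P.sum = Q.sum ∧ ∀ P₁ ≤ P, ∀ Q₁ ≤ Q, P₁.sum = Q₁.sum →
    (P₁ = 0 ∧ Q₁ = 0) ∨ (P₁ = P ∧ Q₁ = Q)

lemma IsPrimitiveIdentity.symm {P Q : Multiset ℕ} (h : IsPrimitiveIdentity P Q) :
    IsPrimitiveIdentity Q P :=
  ⟨h.1.symm, fun Q₁ hQ₁ P₁ hP₁ heq => (h.2 P₁ hP₁ Q₁ hQ₁ heq.symm).imp And.symm And.symm⟩

lemma IsPrimitiveIdentity.sumSeparated {P Q V : Multiset ℕ} (h : IsPrimitiveIdentity P Q)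
    (hVQ : V ≤ Q) (hV : V.sum < Q.sum) : SumSeparated P V := by
  intro P₁ hP₁ V₁ hV₁ heq
  rcases h.2 P₁ hP₁ V₁ (hV₁.trans hVQ) heq with ⟨-, h0⟩ | ⟨-, rfl⟩
  · exact h0
  · exact absurd (hV₁.antisymm hVQ) (by rintro rfl; exact hV.false)

end PrimitiveIdentity

section RobustGcd

/-- Each time the gcd changes it at least doubles, which can happen at most `b` times. -/
lemma exists_robust_gcd_of_lt_mul {n j b : ℕ} {V : Multiset ℕ} (hV : ∀ v ∈ V, 0 < v ∧ v ≤ n)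
    (hb : n < 2 ^ b * V.gcd) :
    ∃ Y W, V = Y + W ∧ Y.card ≤ j * b ∧
      ∀ Y' W', W = Y' + W' → Y'.card ≤ j → W' = 0 ∨ W'.gcd = W.gcd := by
  induction b generalizing V with
  | zero =>
    refine ⟨0, V, (zero_add V).symm, by simp, fun Y' W' hsplit _ => Or.inl ?_⟩
    refine Multiset.eq_zero_of_forall_notMem fun v hv => ?_
    have hvV : v ∈ V := hsplit ▸ Multiset.mem_add.2 (Or.inr hv)
    have := Nat.le_of_dvd (hV v hvV).1 (Multiset.gcd_dvd hvV)
    have := (hV v hvV).2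
    lia
  | succ b ih =>
    by_cases hrobust : ∀ Y' W', V = Y' + W' → Y'.card ≤ j → W' = 0 ∨ W'.gcd = V.gcd
    · exact ⟨0, V, (zero_add V).symm, by simp, hrobust⟩
    push Not at hrobust
    obtain ⟨Y', W', rfl, hY', hW', hne⟩ := hrobust
    have hW'pos : 0 < W'.gcd := Nat.pos_of_ne_zero fun h => by
      obtain ⟨w, hw⟩ := Multiset.exists_mem_of_ne_zero hW'
      exact (hV w (Multiset.mem_add.2 (Or.inr hw))).1.ne' ((Multiset.gcd_eq_zero_iff _).1 h w hw)
    have hdouble : 2 * (Y' + W').gcd ≤ W'.gcd := by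
      obtain ⟨c, hc⟩ : (Y' + W').gcd ∣ W'.gcd := Multiset.gcd_mono (Multiset.subset_of_le
        (Multiset.le_add_left _ _))
      have hc2 : 2 ≤ c := by
        by_contra! hlt
        interval_cases c <;> lia
      calc 2 * (Y' + W').gcd ≤ c * (Y' + W').gcd := Nat.mul_le_mul_right _ hc2
        _ = W'.gcd := by rw [hc, mul_comm]
    obtain ⟨Y, W, rfl, hY, hrob⟩ :=
      ih (V := W') (fun v hv => hV v (Multiset.mem_add.2 (Or.inr hv))) (by
        calc n < 2 ^ (b + 1) * (Y' + W').gcd := hb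
          _ = 2 ^ b * (2 * (Y' + W').gcd) := by ring
          _ ≤ 2 ^ b * W'.gcd := Nat.mul_le_mul_left _ hdouble)
    exact ⟨Y' + Y, W, (add_assoc _ _ _).symm, by rw [Multiset.card_add]; lia, hrob⟩

lemma exists_robust_gcd (n j : ℕ) {V : Multiset ℕ} (hV : ∀ v ∈ V, 0 < v ∧ v ≤ n) :
    ∃ Y W, V = Y + W ∧ Y.card ≤ j * (Nat.log 2 n + 1) ∧
      ∀ Y' W', W = Y' + W' → Y'.card ≤ j → W' = 0 ∨ W'.gcd = W.gcd := by
  rcases V.empty_or_exists_mem with rfl | ⟨v, hv⟩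
  · exact ⟨0, 0, rfl, by simp, fun Y' W' h _ => Or.inl (add_eq_zero.1 h.symm).2⟩
  · refine exists_robust_gcd_of_lt_mul hV ?_
    have hgcd : 0 < V.gcd := Nat.pos_of_dvd_of_pos (Multiset.gcd_dvd hv) (hV v hv).1
    exact (Nat.lt_pow_succ_log_self one_lt_two n).trans_le (Nat.le_mul_of_pos_right _ hgcd)

end RobustGcd

section DifferenceResidues

/-- The residues modulo `a` of the differences `δ = ∑ U₁ - ∑ Y₁` with `-r ≤ δ < a`, where `U₁` and
`Y₁` range over the sub-multisets of `U` and `Y`. -/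
def differenceResidues (U Y : Multiset ℕ) (a r : ℕ) : Finset (ZMod a) :=
  {p ∈ U.powerset.toFinset ×ˢ Y.powerset.toFinset |
      p.2.sum ≤ p.1.sum + r ∧ p.1.sum < p.2.sum + a}.image fun p => (p.1.sum : ZMod a) - p.2.sum

variable {U Y : Multiset ℕ} {a r : ℕ}

lemma mem_differenceResidues {x : ZMod a} :
    x ∈ differenceResidues U Y a r ↔ ∃ U₁ ≤ U, ∃ Y₁ ≤ Y, Y₁.sum ≤ U₁.sum + r ∧
      U₁.sum < Y₁.sum + a ∧ (U₁.sum : ZMod a) - Y₁.sum = x := by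
  simp only [differenceResidues, Finset.mem_image, Finset.mem_filter, Finset.mem_product,
    Multiset.mem_toFinset, Multiset.mem_powerset, Prod.exists]
  grind

lemma zero_mem_differenceResidues (ha : 0 < a) : 0 ∈ differenceResidues U Y a r :=
  mem_differenceResidues.2
    ⟨0, Multiset.zero_le _, 0, Multiset.zero_le _, by simp, by simpa using ha, by simp⟩

lemma card_differenceResidues_add_translateDefect_le (y : ℕ) :
    #(differenceResidues U Y a r) + translateDefect (differenceResidues U Y a r) y ≤
      #(differenceResidues U (y ::ₘ Y) a (r + y)) := by
  rw [← card_union_image_sub]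
  refine Finset.card_le_card (Finset.union_subset (fun x hx => ?_) fun x hx => ?_)
  · obtain ⟨U₁, hU, Y₁, hY, hle, hlt, rfl⟩ := mem_differenceResidues.1 hx
    exact mem_differenceResidues.2
      ⟨U₁, hU, Y₁, hY.trans (Multiset.le_cons_self _ _), by lia, hlt, rfl⟩
  · obtain ⟨z, hz, rfl⟩ := Finset.mem_image.1 hx
    obtain ⟨U₁, hU, Y₁, hY, hle, hlt, rfl⟩ := mem_differenceResidues.1 hz
    refine mem_differenceResidues.2 ⟨U₁, hU, y ::ₘ Y₁, Multiset.cons_le_cons _ hY, ?_, ?_, ?_⟩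
    · rw [Multiset.sum_cons]; lia
    · rw [Multiset.sum_cons]; lia
    · rw [Multiset.sum_cons]; push_cast; ring

/-- A difference `δ` in `[-r, a)` becomes the representative of its class in `[0, a)` after adding
`a` if necessary, so the classes modulo `a` stay distinct modulo any larger modulus. -/
lemma card_differenceResidues_le_cons {a' : ℕ} (ha : 0 < a) (hr : r ≤ a) (haa' : a ≤ a') :
    #(differenceResidues U Y a r) ≤ #(differenceResidues (a ::ₘ U) Y a' 0) := by
  have : NeZero a := ⟨ha.ne'⟩
  have : NeZero a' := ⟨(ha.trans_le haa').ne'⟩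
  refine Finset.card_le_card_of_injOn (fun z => ((z.val : ℕ) : ZMod a')) (fun z hz => ?_) ?_
  · obtain ⟨U₁, hU, Y₁, hY, hle, hlt, rfl⟩ := mem_differenceResidues.1 hz
    have hcong (m : ℕ) (hm : m < a) (heq : ((U₁.sum : ZMod a) - Y₁.sum) = m) :
        ((U₁.sum : ZMod a) - Y₁.sum).val = m := by rw [heq, ZMod.val_cast_of_lt hm]
    rcases le_or_gt Y₁.sum U₁.sum with hYU | hYU
    · refine mem_differenceResidues.2
        ⟨U₁, hU.trans (Multiset.le_cons_self _ _), Y₁, hY, by lia, by lia, ?_⟩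
      beta_reduce
      rw [hcong (U₁.sum - Y₁.sum) (by lia) (by rw [Nat.cast_sub hYU]), Nat.cast_sub hYU]
    · have hsub : Y₁.sum ≤ a + U₁.sum := by lia
      refine mem_differenceResidues.2
        ⟨a ::ₘ U₁, Multiset.cons_le_cons _ hU, Y₁, hY, ?_, ?_, ?_⟩
      · rw [Multiset.sum_cons]; lia
      · rw [Multiset.sum_cons]; lia
      beta_reduce
      rw [hcong (a + U₁.sum - Y₁.sum) (by lia) (by
        rw [Nat.cast_sub hsub, Nat.cast_add, ZMod.natCast_self, zero_add]), Multiset.sum_cons,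
        Nat.cast_sub hsub]
  · intro z _ z' _ h
    have hz := ZMod.val_lt z
    have hz' := ZMod.val_lt z'
    refine ZMod.val_injective a ?_
    have hval : ((z.val : ZMod a')).val = ((z'.val : ZMod a')).val := congrArg ZMod.val h
    rwa [ZMod.val_cast_of_lt (hz.trans_le haa'), ZMod.val_cast_of_lt (hz'.trans_le haa')] at hval

lemma SumSeparated.notMem_differenceResidues {C V : Multiset ℕ} {y : ℕ}
    (h : SumSeparated C V) (hUC : a ::ₘ U ≤ C) (hYV : y ::ₘ Y ≤ V) (hy : 0 < y) (hya : y < a)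
    (hr : r ≤ a) : (y : ZMod a) ∉ differenceResidues U Y a r := by
  intro hmem
  obtain ⟨U₁, hU, Y₁, hY, hle, hlt, heq⟩ := mem_differenceResidues.1 hmem
  have hV₁ : y ::ₘ Y₁ ≤ V := (Multiset.cons_le_cons _ hY).trans hYV
  obtain ⟨c, hc⟩ : (a : ℤ) ∣ y + Y₁.sum - U₁.sum := by
    rw [← ZMod.intCast_zmod_eq_zero_iff_dvd, Int.cast_sub, Int.cast_add, Int.cast_natCast,
      Int.cast_natCast, Int.cast_natCast, ← heq]
    ring
  have hc_cases : c = 0 ∨ c = 1 := by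
    have hlower : (a : ℤ) * -1 < a * c := by lia
    have hupper : (a : ℤ) * c < a * 2 := by lia
    have := lt_of_mul_lt_mul_left hlower (by lia)
    have := lt_of_mul_lt_mul_left hupper (by lia)
    lia
  rcases hc_cases with rfl | rfl
  · refine Multiset.cons_ne_zero (h U₁ ((hU.trans (Multiset.le_cons_self _ _)).trans hUC) _ hV₁ ?_)
    rw [Multiset.sum_cons]; lia
  · refine Multiset.cons_ne_zero (h (a ::ₘ U₁) ((Multiset.cons_le_cons _ hU).trans hUC) _ hV₁ ?_)
    rw [Multiset.sum_cons, Multiset.sum_cons]; lia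

end DifferenceResidues

section AlmostPeriods

/-- The integers in `[1, n]` whose class modulo `a` lies outside `D` and is an almost period of `D`:
translating by it moves at most `g` elements, and at most a quarter, of `D` out of `D`. -/
def almostPeriods (n g : ℕ) {a : ℕ} (D : Finset (ZMod a)) : Finset ℕ :=
  {y ∈ Finset.Icc 1 n | (y : ZMod a) ∉ D ∧ translateDefect D y ≤ g ∧ 4 * translateDefect D y ≤ #D}

lemma one_mem_of_gcd_eq_one {a : ℕ} {H : AddSubgroup (ZMod a)} {W : Multiset ℕ} (hW : W.gcd = 1)
    (hWH : ∀ w ∈ W, (w : ZMod a) ∈ H) : (1 : ZMod a) ∈ H := by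
  obtain ⟨m, hm⟩ := Int.subgroup_cyclic (H.comap (Int.castAddHom (ZMod a)))
  have mem_iff (z : ℤ) : (z : ZMod a) ∈ H ↔ m ∣ z := by
    rw [← Int.mem_zmultiples_iff, AddSubgroup.zmultiples_eq_closure, ← hm]
    rfl
  have hdvd : m.natAbs ∣ W.gcd := Multiset.dvd_gcd.2 fun w hw => by
    rw [← Int.natCast_dvd_natCast, Int.natAbs_dvd, ← mem_iff, Int.cast_natCast]
    exact hWH w hw
  rw [hW, Nat.dvd_one, ← Int.isUnit_iff_natAbs_eq] at hdvd
  simpa using (mem_iff 1).2 hdvd.dvd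

lemma card_almostPeriods_le {n g a : ℕ} {D : Finset (ZMod a)} {W : Multiset ℕ} (hn : n < a)
    (hD : D.Nonempty) (hW : ∀ w ∈ W, w ∈ almostPeriods n g D) (hgcd : W.gcd = 1) :
    #(almostPeriods n g D) ≤ 24 * g := by
  have : NeZero a := ⟨(Nat.zero_le n |>.trans_lt hn).ne'⟩
  set E := (almostPeriods n g D).image (Nat.cast : ℕ → ZMod a) with hE
  have hinj : Set.InjOn (Nat.cast : ℕ → ZMod a) (almostPeriods n g D) := by
    intro x hx y hy hxy
    simp only [almostPeriods, Finset.coe_filter, Set.mem_ofPred_eq, Finset.mem_Icc] at hx hy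
    have hval := congrArg ZMod.val hxy
    rwa [ZMod.val_cast_of_lt (hx.1.2.trans_lt hn), ZMod.val_cast_of_lt (hy.1.2.trans_lt hn)] at hval
  have hgen : AddSubgroup.closure (E : Set (ZMod a)) = ⊤ := by
    refine (AddSubgroup.eq_top_iff' _).2 fun x => ?_
    have hone : 1 ∈ AddSubgroup.closure (E : Set (ZMod a)) := one_mem_of_gcd_eq_one hgcd fun w hw =>
      AddSubgroup.subset_closure (Finset.mem_coe.2 (Finset.mem_image_of_mem _ (hW w hw)))
    simpa using AddSubgroup.nsmul_mem _ hone x.val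
  have hmem : ∀ x ∈ E, x ∉ D ∧ translateDefect D x ≤ g ∧ 4 * translateDefect D x ≤ #D := by
    rw [hE, Finset.forall_mem_image]
    exact fun y hy => (Finset.mem_filter.1 hy).2
  calc #(almostPeriods n g D) = #E := (Finset.card_image_of_injOn hinj).symm
    _ ≤ 24 * min g (#D / 4) := by
        refine card_le_of_translateDefect_le hgen hD (fun x hx => le_min (hmem x hx).2.1 ?_)
          (Finset.disjoint_left.2 fun x hx => (hmem x hx).1) (by lia)
        have := (hmem x hx).2.2
        lia
    _ ≤ 24 * g := Nat.mul_le_mul_left _ (min_le_left _ _)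

end AlmostPeriods

section Greedy

/-- A stage of the greedy choice of parts `Y` of `V`, the remaining parts of `V` being `W`. The
parts of `C` are used up in increasing order: `U` is used up, `a` is the current modulus, and the
difference residues are taken modulo `a`. Of the chosen parts, `p` have enlarged the set of residues
by more than `g` elements, and `q` by a quarter of its size. At least `m` more units can be added to
the range `r` before it exceeds `a`, and `sum_le` ensures that `C` is not exhausted. -/
structure GreedyState (m g : ℕ) (C V : Multiset ℕ) where
  (Y W U T : Multiset ℕ)
  (a r p q : ℕ)
  eq_add : V = Y + W
  eq_cons : C = a ::ₘ (U + T)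
  le_of_mem : ∀ t ∈ T, a ≤ t
  add_le : r + m ≤ a
  sum_le : U.sum + 2 * r ≤ 2 * Y.sum
  card_eq : Y.card = p + q
  mul_le_card : (g + 1) * p ≤ #(differenceResidues U Y a r)
  pow_le_card : 5 ^ q ≤ 4 ^ q * #(differenceResidues U Y a r)

namespace GreedyState

variable {m n g j : ℕ} {C V : Multiset ℕ}

/-- The residues modulo the current modulus that the greedy choice has produced so far. -/
def residues (S : GreedyState m g C V) : Finset (ZMod S.a) := differenceResidues S.U S.Y S.a S.r

/-- No remaining part enlarges the set of residues substantially. -/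
def IsStuck (S : GreedyState m g C V) : Prop :=
  ∀ y ∈ S.W, translateDefect S.residues y ≤ g ∧ 4 * translateDefect S.residues y ≤ #S.residues

lemma cons_le (S : GreedyState m g C V) : S.a ::ₘ S.U ≤ C :=
  (Multiset.cons_le_cons _ (Multiset.le_add_right _ _)).trans S.eq_cons.ge

lemma a_mem (S : GreedyState m g C V) : S.a ∈ C :=
  Multiset.mem_of_le S.cons_le (Multiset.mem_cons_self _ _)

lemma Y_le (S : GreedyState m g C V) : S.Y ≤ V := (Multiset.le_add_right _ _).trans S.eq_add.ge

lemma W_le (S : GreedyState m g C V) : S.W ≤ V := (Multiset.le_add_left _ _).trans S.eq_add.ge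

lemma exists_eq_cons_forall_le {T : Multiset ℕ} (hT : T ≠ 0) :
    ∃ a T', T = a ::ₘ T' ∧ ∀ t ∈ T', a ≤ t := by
  obtain ⟨a, ha, hmin⟩ := T.toFinset.exists_min_image id (Multiset.toFinset_nonempty.2 hT)
  obtain ⟨T', rfl⟩ := Multiset.exists_cons_of_mem (Multiset.mem_toFinset.1 ha)
  exact ⟨a, T', rfl, fun t ht => hmin t (Multiset.mem_toFinset.2 (Multiset.mem_cons_of_mem ht))⟩

lemma exists_init (hn : 0 < n) (hC : ∀ c ∈ C, 2 * n ≤ c) (hC0 : C ≠ 0) :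
    ∃ S : GreedyState n g C V, S.Y = 0 := by
  obtain ⟨a, T, rfl, hT⟩ := exists_eq_cons_forall_le hC0
  have ha : 2 * n ≤ a := hC a (Multiset.mem_cons_self _ _)
  exact ⟨{
    Y := 0, W := V, U := 0, T := T, a := a, r := 0, p := 0, q := 0
    eq_add := (zero_add V).symm
    eq_cons := by rw [zero_add]
    le_of_mem := hT
    add_le := by lia
    sum_le := le_rfl
    card_eq := rfl
    mul_le_card := Nat.zero_le _
    pow_le_card := by
      simpa using Finset.card_pos.2 ⟨_, zero_mem_differenceResidues (by lia)⟩ }, rfl⟩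

lemma exists_pick (S : GreedyState n g C V) (hV : ∀ v ∈ V, v ≤ n) (hS : ¬ S.IsStuck) :
    ∃ S' : GreedyState 0 g C V, S'.Y.card = S.Y.card + 1 := by
  simp only [IsStuck, residues, not_forall] at hS
  obtain ⟨y, hy, hgrow⟩ := hS
  obtain ⟨W', hW'⟩ := Multiset.exists_cons_of_mem hy
  have hyn : y ≤ n := hV y (Multiset.mem_of_le S.W_le hy)
  have hcard := card_differenceResidues_add_translateDefect_le (U := S.U) (Y := S.Y) (a := S.a)
    (r := S.r) y
  have heq_add : V = (y ::ₘ S.Y) + W' :=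
    S.eq_add.trans (by rw [hW', Multiset.cons_add, Multiset.add_cons])
  have hadd_le := S.add_le
  have hsum_le := S.sum_le
  have hcard_eq := S.card_eq
  have hmul := S.mul_le_card
  have hpow := S.pow_le_card
  rcases not_and_or.1 hgrow with hg | hquarter
  · exact ⟨{ S with
      Y := y ::ₘ S.Y, W := W', r := S.r + y, p := S.p + 1
      eq_add := heq_add
      add_le := by lia
      sum_le := by rw [Multiset.sum_cons]; lia
      card_eq := by rw [Multiset.card_cons]; lia
      mul_le_card := by rw [mul_add_one]; lia
      pow_le_card := hpow.trans (Nat.mul_le_mul_left _ (by lia)) }, Multiset.card_cons _ _⟩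
  · exact ⟨{ S with
      Y := y ::ₘ S.Y, W := W', r := S.r + y, q := S.q + 1
      eq_add := heq_add
      add_le := by lia
      sum_le := by rw [Multiset.sum_cons]; lia
      card_eq := by rw [Multiset.card_cons]; lia
      mul_le_card := by lia
      pow_le_card := by
        calc 5 ^ (S.q + 1) = 5 * 5 ^ S.q := pow_succ' _ _
          _ ≤ 5 * (4 ^ S.q * #S.residues) := Nat.mul_le_mul_left _ hpow
          _ = 4 ^ S.q * (5 * #S.residues) := by ring
          _ ≤ 4 ^ S.q * (4 * #(differenceResidues S.U (y ::ₘ S.Y) S.a (S.r + y))) :=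
              Nat.mul_le_mul_left _ (by rw [residues]; lia)
          _ = 4 ^ (S.q + 1) * #(differenceResidues S.U (y ::ₘ S.Y) S.a (S.r + y)) := by ring },
      Multiset.card_cons _ _⟩

/-- When fewer than `n` units are left, the current modulus is moved to `U`. -/
lemma exists_refill (S : GreedyState 0 g C V) (hC : ∀ c ∈ C, 2 * n ≤ c) (hn : 0 < n)
    (hVC : 2 * V.sum < C.sum) : ∃ S' : GreedyState n g C V, S'.Y = S.Y := by
  rcases le_or_gt (S.r + n) S.a with hle | hlt
  · exact ⟨{ S with add_le := hle }, rfl⟩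
  have hr : S.r ≤ S.a := S.add_le
  have hsum_le := S.sum_le
  have ha : 2 * n ≤ S.a := hC S.a S.a_mem
  have hT : S.T ≠ 0 := by
    intro hT
    have hCsum : C.sum = S.a + S.U.sum :=
      (congrArg Multiset.sum S.eq_cons).trans (by rw [hT, add_zero, Multiset.sum_cons])
    have hVsum : V.sum = S.Y.sum + S.W.sum :=
      (congrArg Multiset.sum S.eq_add).trans (Multiset.sum_add _ _)
    lia
  obtain ⟨a', T', hTcons, hT'⟩ := exists_eq_cons_forall_le hT
  have haa' : S.a ≤ a' := S.le_of_mem a' (hTcons ▸ Multiset.mem_cons_self _ _)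
  have hcard := card_differenceResidues_le_cons (U := S.U) (Y := S.Y) (by lia) hr haa'
  exact ⟨{
    Y := S.Y, W := S.W, U := S.a ::ₘ S.U, T := T', a := a', r := 0, p := S.p, q := S.q
    eq_add := S.eq_add
    eq_cons := S.eq_cons.trans (by
      rw [hTcons, Multiset.add_cons, Multiset.cons_add, Multiset.cons_swap])
    le_of_mem := hT'
    add_le := by lia
    sum_le := by rw [Multiset.sum_cons]; lia
    card_eq := S.card_eq
    mul_le_card := S.mul_le_card.trans hcard
    pow_le_card := S.pow_le_card.trans (Nat.mul_le_mul_left _ hcard) }, rfl⟩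

lemma card_U_le (S : GreedyState m g C V) (hn : 0 < n) (hC : ∀ c ∈ C, 2 * n ≤ c)
    (hV : ∀ v ∈ V, v ≤ n) : S.U.card ≤ S.Y.card := by
  have hlower : S.U.card * (2 * n) ≤ S.U.sum := Multiset.card_nsmul_le_sum fun u hu =>
    hC u (Multiset.mem_of_le S.cons_le (Multiset.mem_cons_of_mem hu))
  have hupper : S.Y.sum ≤ S.Y.card * n := Multiset.sum_le_card_nsmul _ _ fun y hy =>
    hV y (Multiset.mem_of_le S.Y_le hy)
  have hsum_le := S.sum_le
  exact Nat.le_of_mul_le_mul_right (by lia : S.U.card * (2 * n) ≤ S.Y.card * (2 * n)) (by lia)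

lemma four_pow_mul_two_pow_le (q : ℕ) : 4 ^ q * 2 ^ (q / 4) ≤ 5 ^ q := by
  have hpow (b : ℕ) : b ^ q = (b ^ 4) ^ (q / 4) * b ^ (q % 4) := by
    rw [← pow_mul, ← pow_add, Nat.div_add_mod]
  calc 4 ^ q * 2 ^ (q / 4) = (4 ^ 4 * 2) ^ (q / 4) * 4 ^ (q % 4) := by
        rw [hpow 4, mul_right_comm, ← mul_pow]
    _ ≤ (5 ^ 4) ^ (q / 4) * 5 ^ (q % 4) := by gcongr <;> norm_num
    _ = 5 ^ q := (hpow 5).symm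

lemma card_Y_lt (S : GreedyState m (6 * n / j) C V) (hn : 0 < n)
    (hC : ∀ c ∈ C, 0 < c ∧ c ≤ 3 * n) (hj : 32 * (Nat.log 2 n + 1) ≤ j) : S.Y.card < j := by
  obtain ⟨ha, ha3⟩ := hC S.a S.a_mem
  have : NeZero S.a := ⟨ha.ne'⟩
  have hcard : #(differenceResidues S.U S.Y S.a S.r) ≤ 3 * n :=
    (Finset.card_le_univ _).trans (by rwa [ZMod.card])
  have hp : 2 * S.p < j := by
    have hg : 6 * n < (6 * n / j + 1) * j :=
      (Nat.lt_mul_div_succ (6 * n) (by lia)).trans_eq (mul_comm _ _)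
    have hmul := S.mul_le_card.trans hcard
    by_contra! hle
    have := Nat.mul_le_mul_left (6 * n / j + 1) hle
    lia
  have hq : 2 * S.q < j := by
    have hpow : 2 ^ (S.q / 4) < 2 ^ (Nat.log 2 n + 1 + 2) := by
      refine Nat.lt_of_mul_lt_mul_left (a := 4 ^ S.q) ?_
      calc 4 ^ S.q * 2 ^ (S.q / 4) ≤ 5 ^ S.q := four_pow_mul_two_pow_le S.q
        _ ≤ 4 ^ S.q * (3 * n) := S.pow_le_card.trans (Nat.mul_le_mul_left _ hcard)
        _ < 4 ^ S.q * 2 ^ (Nat.log 2 n + 1 + 2) := by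
            refine Nat.mul_lt_mul_of_pos_left ?_ (by positivity)
            have := Nat.lt_pow_succ_log_self one_lt_two n
            rw [pow_add]; lia
    have := (Nat.pow_lt_pow_iff_right one_lt_two).1 hpow
    lia
  rw [S.card_eq]
  lia

theorem exists_isStuck (hn : 0 < n) (hC : ∀ c ∈ C, 2 * n ≤ c ∧ c ≤ 3 * n) (hV : ∀ v ∈ V, v ≤ n)
    (hVC : 2 * V.sum < C.sum) (hj : 32 * (Nat.log 2 n + 1) ≤ j) :
    ∃ S : GreedyState n (6 * n / j) C V, S.IsStuck ∧ S.Y.card < j := by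
  have hcard_lt (S : GreedyState n (6 * n / j) C V) : S.Y.card < j :=
    S.card_Y_lt hn (fun c hc => ⟨by have := (hC c hc).1; lia, (hC c hc).2⟩) hj
  by_contra! hnone
  have hall (i : ℕ) : ∃ S : GreedyState n (6 * n / j) C V, S.Y.card = i := by
    induction i with
    | zero =>
      obtain ⟨S, hS⟩ := exists_init (g := 6 * n / j) (V := V) hn (fun c hc => (hC c hc).1)
        (by rintro rfl; simp at hVC)
      exact ⟨S, by rw [hS, Multiset.card_zero]⟩
    | succ i ih =>
      obtain ⟨S, rfl⟩ := ih
      obtain ⟨S', hS'⟩ := S.exists_pick hV fun h => (hnone S h).not_gt (hcard_lt S)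
      obtain ⟨S'', hS''⟩ := S'.exists_refill (fun c hc => (hC c hc).1) hn hVC
      exact ⟨S'', by rw [hS'', hS']⟩
  obtain ⟨S, hS⟩ := hall j
  exact (hcard_lt S).ne hS

end GreedyState

end Greedy

section Containers

/-- The multisets of at most `j` parts, each between `1` and `m`. -/
def boundedMultisets (m j : ℕ) : Finset (Multiset ℕ) :=
  (Fintype.piFinset fun _ : Fin j => Finset.range (m + 1)).image
    fun f => (Finset.univ.val.map f).filter (0 < ·)

lemma mem_boundedMultisets {m j : ℕ} {U : Multiset ℕ} (hU : ∀ u ∈ U, 0 < u ∧ u ≤ m)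
    (hcard : U.card ≤ j) : U ∈ boundedMultisets m j := by
  obtain ⟨l, hl⟩ : ∃ l : List ℕ, (l : Multiset ℕ) = U + Multiset.replicate (j - U.card) 0 :=
    Quot.exists_rep _
  obtain rfl : l.length = j := by
    have := congrArg Multiset.card hl
    rw [Multiset.card_add, Multiset.card_replicate] at this
    exact this.trans (by lia)
  have hpad : Finset.univ.val.map l.get = U + Multiset.replicate (l.length - U.card) 0 := by
    rw [Fin.univ_val_map, List.ofFn_get]
    exact hl
  refine Finset.mem_image.2 ⟨l.get, Fintype.mem_piFinset.2 fun i => ?_, ?_⟩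
  · have hi : l.get i ∈ U + Multiset.replicate (l.length - U.card) 0 :=
      hpad ▸ Multiset.mem_map_of_mem _ (Finset.mem_univ i)
    rcases Multiset.mem_add.1 hi with hi | hi
    · exact Finset.mem_range_succ_iff.2 (hU _ hi).2
    · exact Finset.mem_range_succ_iff.2 ((Multiset.eq_of_mem_replicate hi).trans_le (Nat.zero_le _))
  · rw [hpad, Multiset.filter_add, Multiset.filter_eq_self.2 fun u hu => (hU u hu).1,
      Multiset.filter_eq_nil.2 fun u hu => by simp [Multiset.eq_of_mem_replicate hu], add_zero]

lemma card_boundedMultisets_le (m j : ℕ) : #(boundedMultisets m j) ≤ (m + 1) ^ j :=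
  Finset.card_image_le.trans (by simp)

/-- The sets of almost periods of sets of difference residues that have at most `144 n / j`
elements. -/
def almostPeriodSets (n j : ℕ) : Finset (Finset ℕ) :=
  {E ∈ (boundedMultisets (3 * n) j ×ˢ boundedMultisets (3 * n) j ×ˢ
      Finset.range (3 * n + 1) ×ˢ Finset.range (3 * n + 1)).image fun p =>
      almostPeriods n (6 * n / j) (differenceResidues p.1 p.2.1 p.2.2.1 p.2.2.2) |
    #E * j ≤ 144 * n}

/-- The family of sets one of which contains all but a few parts of every multiset `V` as in
`IsPrimitiveIdentity.exists_container`. -/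
def containers (n j : ℕ) : Finset (Finset ℕ) :=
  (Finset.range (n + 1) ×ˢ insert ∅ (insert (Finset.Icc 1 (n / j)) (almostPeriodSets n j))).image
    fun p => p.2.image (p.1 * ·)

lemma card_mul_le_of_mem_containers {n j : ℕ} {E : Finset ℕ} (hE : E ∈ containers n j) :
    #E * j ≤ 144 * n := by
  obtain ⟨⟨d, E⟩, hdE, rfl⟩ := Finset.mem_image.1 hE
  refine (Nat.mul_le_mul_right j Finset.card_image_le).trans ?_
  rcases Finset.mem_insert.1 (Finset.mem_product.1 hdE).2 with rfl | hE'
  · simp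
  rcases Finset.mem_insert.1 hE' with rfl | hE''
  · simpa using (Nat.div_mul_le_self n j).trans (by lia)
  · exact (Finset.mem_filter.1 hE'').2

lemma card_containers_le {n : ℕ} (hn : 0 < n) (j : ℕ) :
    #(containers n j) ≤ (3 * n + 1) ^ (2 * j + 4) := by
  have hsets : #(almostPeriodSets n j) ≤ (3 * n + 1) ^ (2 * j + 2) :=
    calc #(almostPeriodSets n j)
        ≤ #(boundedMultisets (3 * n) j) * (#(boundedMultisets (3 * n) j) *
          ((3 * n + 1) * (3 * n + 1))) :=
          (Finset.card_filter_le _ _).trans (Finset.card_image_le.trans (by simp))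
      _ ≤ (3 * n + 1) ^ j * ((3 * n + 1) ^ j * ((3 * n + 1) * (3 * n + 1))) := by
          gcongr <;> exact card_boundedMultisets_le _ _
      _ = (3 * n + 1) ^ (2 * j + 2) := by ring
  calc #(containers n j)
      ≤ (n + 1) * (#(almostPeriodSets n j) + 1 + 1) := by
        refine Finset.card_image_le.trans ?_
        rw [Finset.card_product, Finset.card_range]
        gcongr
        exact (Finset.card_insert_le _ _).trans (Nat.succ_le_succ (Finset.card_insert_le _ _))
    _ ≤ (3 * n + 1) * ((3 * n + 1) ^ (2 * j + 2) * (3 * n + 1)) := by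
        have := Nat.one_le_pow (2 * j + 2) (3 * n + 1) (by lia)
        gcongr
        · lia
        · nlinarith
    _ = (3 * n + 1) ^ (2 * j + 4) := by ring

lemma exists_almostPeriodSet {n j : ℕ} {C W : Multiset ℕ} (hn : 0 < n)
    (hj : 32 * (Nat.log 2 n + 1) ≤ j) (hC : ∀ c ∈ C, 2 * n ≤ c ∧ c ≤ 3 * n)
    (hW : ∀ w ∈ W, 0 < w ∧ w ≤ n) (hsep : SumSeparated C W) (hsum : 2 * W.sum < C.sum)
    (hgcd : ∀ Y W', W = Y + W' → Y.card ≤ j → W' = 0 ∨ W'.gcd = 1) :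
    ∃ Y W', W = Y + W' ∧ Y.card ≤ j ∧
      ∃ E ∈ insert ∅ (almostPeriodSets n j), ∀ w ∈ W', w ∈ E := by
  obtain ⟨S, hstuck, hYj⟩ := GreedyState.exists_isStuck hn hC (fun w hw => (hW w hw).2) hsum hj
  refine ⟨S.Y, S.W, S.eq_add, hYj.le, ?_⟩
  rcases hgcd S.Y S.W S.eq_add hYj.le with h0 | h1
  · exact ⟨∅, Finset.mem_insert_self _ _, by simp [h0]⟩
  have ha := hC S.a S.a_mem
  have hra : S.r ≤ S.a := (Nat.le_add_right _ _).trans S.add_le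
  have hmem : ∀ w ∈ S.W, w ∈ almostPeriods n (6 * n / j) S.residues := by
    intro w hw
    have hwn := hW w (Multiset.mem_of_le S.W_le hw)
    refine Finset.mem_filter.2 ⟨Finset.mem_Icc.2 hwn, ?_, hstuck w hw⟩
    refine hsep.notMem_differenceResidues S.cons_le ?_ hwn.1 (by lia) hra
    rw [← Multiset.singleton_add, add_comm]
    exact (Multiset.add_le_add_iff_left.2 (Multiset.singleton_le.2 hw)).trans S.eq_add.ge
  have hcard := card_almostPeriods_le (by lia) ⟨0, zero_mem_differenceResidues (by lia)⟩ hmem h1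
  refine ⟨_, Finset.mem_insert_of_mem (Finset.mem_filter.2 ⟨Finset.mem_image.2
    ⟨(S.U, S.Y, S.a, S.r), ?_, rfl⟩, ?_⟩), hmem⟩
  · simp only [Finset.mem_product, Finset.mem_range_succ_iff]
    refine ⟨mem_boundedMultisets (fun u hu => ?_) ?_,
      mem_boundedMultisets (fun y hy => ?_) hYj.le, by lia, by lia⟩
    · have := hC u (Multiset.mem_of_le S.cons_le (Multiset.mem_cons_of_mem hu))
      exact ⟨by lia, this.2⟩
    · exact (S.card_U_le hn (fun c hc => (hC c hc).1) fun w hw => (hW w hw).2).trans hYj.le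
    · have := hW y (Multiset.mem_of_le S.Y_le hy)
      exact ⟨this.1, by lia⟩
  · calc _ ≤ 24 * (6 * n / j) * j := Nat.mul_le_mul_right j hcard
      _ = 24 * (6 * n / j * j) := mul_assoc _ _ _
      _ ≤ 24 * (6 * n) := Nat.mul_le_mul_left _ (Nat.div_mul_le_self _ _)
      _ = 144 * n := by ring

lemma exists_small_parts {n j : ℕ} (W : Multiset ℕ) (hn : 0 < n) (hj : 0 < j)
    (hpos : ∀ w ∈ W, 0 < w) (hsum : W.sum ≤ 4 * n) :
    ∃ Y W', W = Y + W' ∧ Y.card ≤ 4 * j ∧ ∀ w ∈ W', w ∈ Finset.Icc 1 (n / j) := by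
  refine ⟨W.filter fun w => n < w * j, W.filter fun w => ¬ n < w * j,
    (Multiset.filter_add_not _ W).symm, ?_, fun w hw => ?_⟩
  · have hlower : (W.filter fun w => n < w * j).card * n ≤
        ((W.filter fun w => n < w * j).map (· * j)).sum := by
      rw [← Multiset.card_map (· * j)]
      refine Multiset.card_nsmul_le_sum fun x hx => ?_
      obtain ⟨w, hw, rfl⟩ := Multiset.mem_map.1 hx
      exact (Multiset.mem_filter.1 hw).2.le
    refine Nat.le_of_mul_le_mul_right ?_ hn
    calc _ ≤ (W.filter fun w => n < w * j).sum * j := by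
          rwa [Multiset.sum_map_mul_right, Multiset.map_id'] at hlower
      _ ≤ 4 * n * j := Nat.mul_le_mul_right j <| hsum.trans' <| by
          conv_rhs => rw [← Multiset.filter_add_not (fun w => n < w * j) W, Multiset.sum_add]
          exact Nat.le_add_right _ _
      _ = 4 * j * n := by ring
  · obtain ⟨hwW, hwj⟩ := Multiset.mem_filter.1 hw
    exact Finset.mem_Icc.2 ⟨hpos w hwW, (Nat.le_div_iff_mul_le hj).2 (not_lt.1 hwj)⟩

/-- After division by the gcd `d` either the parts are few up to small ones, or the other side of
the identity is large enough to be coarsened to multiples `d * c` with `2 n ≤ c ≤ 3 n`. -/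
lemma IsPrimitiveIdentity.exists_container_of_map_mul {n j d : ℕ} {P Q W : Multiset ℕ}
    (h : IsPrimitiveIdentity P Q) (hj : 32 * (Nat.log 2 n + 1) ≤ j) (hP : ∀ p ∈ P, p ≤ n)
    (hd : 0 < d) (hdn : d ≤ n) (hW : ∀ w ∈ W, 0 < w ∧ w ≤ n) (hWQ : W.map (d * ·) ≤ Q)
    (hsum : 4 * (d * W.sum) ≤ Q.sum + 3 * n)
    (hgcd : ∀ Y W', W = Y + W' → Y.card ≤ j → W' = 0 ∨ W'.gcd = 1) :
    ∃ Y W', W = Y + W' ∧ Y.card ≤ 4 * j ∧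
      ∃ E ∈ insert ∅ (insert (Finset.Icc 1 (n / j)) (almostPeriodSets n j)), ∀ w ∈ W', w ∈ E := by
  have hn : 0 < n := hd.trans_le hdn
  have hnd : n ≤ n * d := Nat.le_mul_of_pos_right n hd
  rcases le_or_gt Q.sum (12 * (n * d)) with hsmall | hlarge
  · have hWsum : W.sum ≤ 4 * n := Nat.le_of_mul_le_mul_left (by lia : d * W.sum ≤ d * (4 * n)) hd
    obtain ⟨Y, W', hsplit, hY, hW'⟩ :=
      exists_small_parts (j := j) W hn (by lia) (fun w hw => (hW w hw).1) hWsum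
    exact ⟨Y, W', hsplit, hY, _, by simp, hW'⟩
  obtain ⟨D, hDn, hD, hDsum⟩ := exists_isCoarsening_map_mul hd P hP
  obtain ⟨C, hCn, hC, hCsum⟩ := exists_isCoarsening_blocks (m := 2 * n) D hDn
  have hQC : Q.sum ≤ d * C.sum + 4 * (n * d) := by
    have := Nat.mul_le_mul_left d hCsum
    rw [← h.1]
    lia
  have hsep : SumSeparated C W :=
    (((h.sumSeparated hWQ (by rw [sum_map_const_mul]; lia)).of_isCoarsening hD).of_map_mul
      ).of_isCoarsening hC
  have hWC : 2 * W.sum < C.sum :=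
    Nat.lt_of_mul_lt_mul_left (by lia : d * (2 * W.sum) < d * C.sum)
  obtain ⟨Y, W', hsplit, hY, E, hE, hW'⟩ := exists_almostPeriodSet hn hj
    (fun c hc => ⟨(hCn c hc).1, by have := (hCn c hc).2; lia⟩) hW hsep hWC hgcd
  exact ⟨Y, W', hsplit, by lia, E, Finset.insert_subset_insert _ (Finset.subset_insert _ _) hE, hW'⟩

theorem IsPrimitiveIdentity.exists_container {n j : ℕ} {P Q V : Multiset ℕ}
    (h : IsPrimitiveIdentity P Q) (hj : 32 * (Nat.log 2 n + 1) ≤ j) (hP : ∀ p ∈ P, p ≤ n)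
    (hV : ∀ v ∈ V, 0 < v ∧ v ≤ n) (hVQ : V ≤ Q) (hsum : 4 * V.sum ≤ Q.sum + 3 * n) :
    ∃ Y W, V = Y + W ∧ Y.card ≤ j * (Nat.log 2 n + 5) ∧
      ∃ E ∈ containers n j, ∀ w ∈ W, w ∈ E := by
  obtain ⟨Y, W, rfl, hYcard, hrobust⟩ := exists_robust_gcd n j hV
  rcases eq_or_ne W 0 with rfl | hW0
  · exact ⟨Y, 0, rfl, by lia, ∅, Finset.mem_image.2 ⟨(0, ∅), by simp, rfl⟩, by simp⟩
  have hW (w) (hw : w ∈ W) : 0 < w ∧ w ≤ n := hV w (Multiset.mem_add.2 (Or.inr hw))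
  obtain ⟨w, hw⟩ := Multiset.exists_mem_of_ne_zero hW0
  have hd : 0 < W.gcd := Nat.pos_of_dvd_of_pos (Multiset.gcd_dvd hw) (hW w hw).1
  have hdn : W.gcd ≤ n := (Nat.le_of_dvd (hW w hw).1 (Multiset.gcd_dvd hw)).trans (hW w hw).2
  obtain ⟨W₀, hW₀, -⟩ := Multiset.extract_gcd W hW0
  generalize W.gcd = d at *
  subst hW₀
  obtain ⟨Y₀, W₁, rfl, hY₀, E, hE, hW₁⟩ := h.exists_container_of_map_mul (W := W₀) hj hP hd hdn
    (fun x hx => by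
      have := hW _ (Multiset.mem_map_of_mem _ hx)
      exact ⟨Nat.pos_of_mul_pos_left this.1, (Nat.le_mul_of_pos_left x hd).trans this.2⟩)
    ((Multiset.le_add_left _ _).trans hVQ)
    (by rw [Multiset.sum_add, sum_map_const_mul] at hsum; lia)
    (fun Y' W' hsplit hY' => by
      refine (hrobust (Y'.map (d * ·)) (W'.map (d * ·)) (by rw [hsplit, Multiset.map_add])
        (by rwa [Multiset.card_map])).imp Multiset.map_eq_zero.1 fun hgcd => ?_
      rw [Multiset.gcd_map_mul, normalize_eq] at hgcd
      exact Nat.eq_of_mul_eq_mul_left hd (hgcd.trans (mul_one d).symm))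
  refine ⟨Y + Y₀.map (d * ·), W₁.map (d * ·), by rw [Multiset.map_add, add_assoc], ?_,
    E.image (d * ·), Finset.mem_image.2 ⟨(d, E), ?_, rfl⟩, fun x hx => ?_⟩
  · rw [Multiset.card_add, Multiset.card_map]; lia
  · exact Finset.mem_product.2 ⟨Finset.mem_range_succ_iff.2 hdn, hE⟩
  · obtain ⟨y, hy, rfl⟩ := Multiset.mem_map.1 hx
    exact Finset.mem_image_of_mem _ (hW₁ y hy)

end Containers

section QuarterParts

/-- `V` is a sub-multiset of one side of a primitive partition identity with parts in `[1, n]`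
whose sum is at most a quarter of the sum of that side, up to `3 n / 4`. -/
def IsQuarterPart (n : ℕ) (V : Multiset ℕ) : Prop :=
  (∀ v ∈ V, 0 < v ∧ v ≤ n) ∧ ∃ P Q, IsPrimitiveIdentity P Q ∧ (∀ p ∈ P, p ≤ n) ∧ V ≤ Q ∧
    4 * V.sum ≤ Q.sum + 3 * n

namespace IsQuarterPart

variable {n j : ℕ} {V : Multiset ℕ}

lemma exists_container (h : IsQuarterPart n V) (hj : 32 * (Nat.log 2 n + 1) ≤ j) :
    ∃ Y W, V = Y + W ∧ Y.card ≤ j * (Nat.log 2 n + 5) ∧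
      ∃ E ∈ containers n j, ∀ w ∈ W, w ∈ E := by
  obtain ⟨hV, P, Q, hPQ, hP, hVQ, hsum⟩ := h
  exact hPQ.exists_container hj hP hV hVQ hsum

lemma card_le (h : IsQuarterPart n V) : V.card ≤ 176 * n * (Nat.log 2 n + 5) := by
  rcases n.eq_zero_or_pos with rfl | hn
  · simp [Multiset.eq_zero_of_forall_notMem fun v hv => by have := h.1 v hv; lia]
  have hlog : Nat.log 2 n < n := Nat.log_lt_self 2 hn.ne'
  obtain ⟨Y, W, rfl, hY, E, hE, hW⟩ := h.exists_container (j := 176 * n) (by lia)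
  have hE0 : E = ∅ := by
    rw [← Finset.card_eq_zero]
    by_contra hpos
    have := card_mul_le_of_mem_containers hE
    have := Nat.le_mul_of_pos_left (176 * n) (Nat.pos_of_ne_zero hpos)
    lia
  have hW0 : W = 0 := Multiset.eq_zero_of_forall_notMem fun w hw => by simpa [hE0] using hW w hw
  rwa [hW0, add_zero]

/-- Outside a container, a part of multiplicity at least `K` uses up `K` of the exceptional
parts. -/
lemma exists_mul_card_filter_le_count (h : IsQuarterPart n V) (hj : 32 * (Nat.log 2 n + 1) ≤ j) :
    ∃ e, e * j ≤ 144 * n ∧ ∀ K, K * #{v ∈ V.toFinset | K ≤ V.count v} ≤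
      j * (Nat.log 2 n + 5) + K * e := by
  obtain ⟨Y, W, rfl, hY, E, hE, hW⟩ := h.exists_container hj
  refine ⟨#E, card_mul_le_of_mem_containers hE, fun K => ?_⟩
  set F := {v ∈ (Y + W).toFinset | K ≤ (Y + W).count v}
  have hcount : ∀ v ∈ F \ E, K ≤ Y.count v := by
    intro v hv
    obtain ⟨hvF, hvE⟩ := Finset.mem_sdiff.1 hv
    have hvW : W.count v = 0 := Multiset.count_eq_zero_of_notMem fun hvW => hvE (hW v hvW)
    simpa only [Multiset.count_add, hvW, add_zero] using (Finset.mem_filter.1 hvF).2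
  have houtside : K * #(F \ E) ≤ Y.card := by
    calc K * #(F \ E) ≤ ∑ v ∈ F \ E, Y.count v := by
          simpa only [smul_eq_mul, mul_comm] using Finset.card_nsmul_le_sum _ _ K hcount
      _ ≤ ∑ v ∈ F \ E ∪ Y.toFinset, Y.count v :=
          Finset.sum_le_sum_of_subset Finset.subset_union_left
      _ = Y.card := Multiset.sum_count_eq_card fun _ hv =>
          Finset.mem_union_right _ (Multiset.mem_toFinset.2 hv)
  calc K * #F ≤ K * (#(F \ E) + #E) := Nat.mul_le_mul_left _ Finset.card_le_card_sdiff_add_card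
    _ ≤ j * (Nat.log 2 n + 5) + K * #E := by rw [mul_add]; lia

end IsQuarterPart

lemma exists_halves {n : ℕ} (W : Multiset ℕ) (hW : ∀ w ∈ W, w ≤ n) :
    ∃ A B, W = A + B ∧ 2 * A.sum ≤ W.sum + n ∧ 2 * B.sum ≤ W.sum + n := by
  induction W using Multiset.induction_on with
  | empty => exact ⟨0, 0, rfl, by simp, by simp⟩
  | cons w W ih =>
    obtain ⟨A, B, rfl, hA, hB⟩ := ih fun v hv => hW v (Multiset.mem_cons_of_mem hv)
    have hw := hW w (Multiset.mem_cons_self _ _)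
    rw [Multiset.sum_add] at hA hB
    rcases le_total A.sum B.sum with hle | hle
    · exact ⟨w ::ₘ A, B, by rw [Multiset.cons_add], by simp; lia, by simp; lia⟩
    · exact ⟨A, w ::ₘ B, by rw [Multiset.add_cons], by simp; lia, by simp; lia⟩

lemma IsPrimitiveIdentity.exists_quarters {n : ℕ} {P Q : Multiset ℕ} (h : IsPrimitiveIdentity P Q)
    (hP : ∀ p ∈ P, p ≤ n) (hQ : ∀ q ∈ Q, 0 < q ∧ q ≤ n) :
    ∃ V : Fin 4 → Multiset ℕ, (∀ i, IsQuarterPart n (V i)) ∧ ∑ i, V i = Q := by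
  have hQn (R) (hR : R ≤ Q) : ∀ q ∈ R, q ≤ n := fun q hq => (hQ q (Multiset.mem_of_le hR hq)).2
  obtain ⟨A, B, rfl, hA, hB⟩ := exists_halves Q (hQn Q le_rfl)
  obtain ⟨A₁, A₂, rfl, hA₁, hA₂⟩ := exists_halves A (hQn A (Multiset.le_add_right _ _))
  obtain ⟨B₁, B₂, rfl, hB₁, hB₂⟩ := exists_halves B (hQn B (Multiset.le_add_left _ _))
  have hquarter (V) (hV : V ≤ A₁ + A₂ + (B₁ + B₂))
      (hsum : 4 * V.sum ≤ (A₁ + A₂ + (B₁ + B₂)).sum + 3 * n) : IsQuarterPart n V :=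
    ⟨fun v hv => hQ v (Multiset.mem_of_le hV hv), P, _, h, hP, hV, hsum⟩
  refine ⟨![A₁, A₂, B₁, B₂], ?_, by simp [Fin.sum_univ_four, add_assoc]⟩
  simp only [Fin.forall_fin_succ, Matrix.cons_val_zero, Matrix.cons_val_succ, IsEmpty.forall_iff,
    and_true]
  refine ⟨hquarter _ ?_ (by lia), hquarter _ ?_ (by lia), hquarter _ ?_ (by lia),
    hquarter _ ?_ (by lia)⟩
  · exact (Multiset.le_add_right _ _).trans (Multiset.le_add_right _ _)
  · exact (Multiset.le_add_left _ _).trans (Multiset.le_add_right _ _)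
  · exact (Multiset.le_add_right _ _).trans (Multiset.le_add_left _ _)
  · exact (Multiset.le_add_left _ _).trans (Multiset.le_add_left _ _)

end QuarterParts

section Profiles

variable {α : Type*} [DecidableEq α] {E : Finset α} {𝓜 : Finset (Multiset α)}

/-- Rankin's trick: an upper bound for the number of multisets supported in `E` by the product over
`E` of the generating function of the multiplicities. -/
lemma card_mul_le_sum_pow_card {B : ℕ} {w : ℕ → ℝ} {c : ℝ}
    (hw : ∀ m, 0 ≤ w m) (hE : ∀ W ∈ 𝓜, ∀ y ∈ W, y ∈ E) (hB : ∀ W ∈ 𝓜, W.card ≤ B)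
    (hc : ∀ W ∈ 𝓜, c ≤ ∏ y ∈ E, w (W.count y)) :
    #𝓜 * c ≤ (∑ m ∈ Finset.range (B + 1), w m) ^ #E := by
  let mult (W : Multiset α) (y : E) : ℕ := W.count (y : α)
  have hinj : Set.InjOn mult 𝓜 := by
    intro W hW W' hW' heq
    ext y
    by_cases hy : y ∈ E
    · exact congrFun heq ⟨y, hy⟩
    · rw [Multiset.count_eq_zero_of_notMem fun h => hy (hE W hW y h),
        Multiset.count_eq_zero_of_notMem fun h => hy (hE W' hW' y h)]
  calc #𝓜 * c ≤ ∑ W ∈ 𝓜, ∏ y : E, w (mult W y) := by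
        rw [← nsmul_eq_mul]
        exact Finset.card_nsmul_le_sum _ _ _ fun W hW =>
          (hc W hW).trans_eq (Finset.prod_coe_sort E fun y => w (W.count y)).symm
    _ = ∑ m ∈ 𝓜.image mult, ∏ y : E, w (m y) :=
        (Finset.sum_image (f := fun m => ∏ y : E, w (m y)) hinj).symm
    _ ≤ ∑ m ∈ Fintype.piFinset fun _ : E => Finset.range (B + 1), ∏ y : E, w (m y) := by
        refine Finset.sum_le_sum_of_subset_of_nonneg (Finset.image_subset_iff.2 fun W hW => ?_)
          fun m _ _ => Finset.prod_nonneg fun y _ => hw _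
        exact Fintype.mem_piFinset.2 fun y =>
          Finset.mem_range_succ_iff.2 ((Multiset.count_le_card _ _).trans (hB W hW))
    _ = (∑ m ∈ Finset.range (B + 1), w m) ^ #E := by
        rw [← Finset.prod_univ_sum, Finset.prod_const, Finset.card_univ, Fintype.card_coe]

/-- The weight of a multiplicity in Rankin's trick: `x` if it is positive and less than `K`, and `z`
if it is at least `K`. -/
noncomputable def multiplicityWeight (K : ℕ) (x z : ℝ) (m : ℕ) : ℝ :=
  if m = 0 then 1 else if m < K then x else z

lemma multiplicityWeight_nonneg {K : ℕ} {x z : ℝ} (hx : 0 ≤ x) (hz : 0 ≤ z) (m : ℕ) :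
    0 ≤ multiplicityWeight K x z m := by
  rw [multiplicityWeight]
  split_ifs <;> positivity

lemma sum_multiplicityWeight_le {x z : ℝ} (hx : 0 ≤ x) (hz : 0 ≤ z) (B K : ℕ) :
    ∑ m ∈ Finset.range (B + 1), multiplicityWeight K x z m ≤ K * x + B * z + 1 := by
  have hle (m : ℕ) : multiplicityWeight K x z (m + 1) ≤ (if m < K then x else 0) + z := by
    simp only [multiplicityWeight, Nat.succ_ne_zero, if_false]
    split_ifs <;> linarith
  calc ∑ m ∈ Finset.range (B + 1), multiplicityWeight K x z m
      = ∑ m ∈ Finset.range B, multiplicityWeight K x z (m + 1) + 1 :=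
        Finset.sum_range_succ' _ _
    _ ≤ ∑ m ∈ Finset.range B, ((if m < K then x else 0) + z) + 1 := by gcongr; exact hle _
    _ ≤ K * x + B * z + 1 := by
        rw [Finset.sum_add_distrib, Finset.sum_const, Finset.card_range, nsmul_eq_mul,
          ← Finset.sum_filter, Finset.sum_const, nsmul_eq_mul]
        gcongr
        exact (Finset.card_le_card fun m hm =>
          Finset.mem_range.2 (Finset.mem_filter.1 hm).2).trans_eq (Finset.card_range K)

lemma pow_mul_pow_le_prod_count {W : Multiset α} {K d T : ℕ} {x z : ℝ} (hx : 0 < x)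
    (hx1 : x ≤ 1) (hz : 0 < z) (hz1 : z ≤ 1) (hd : #W.toFinset ≤ d)
    (hT : #{y ∈ W.toFinset | K ≤ W.count y} ≤ T) :
    x ^ d * z ^ T ≤ ∏ y ∈ E, multiplicityWeight K x z (W.count y) := by
  have hle (y) : (if y ∈ W.toFinset then x else 1) *
      (if y ∈ {y ∈ W.toFinset | K ≤ W.count y} then z else 1) ≤
      multiplicityWeight K x z (W.count y) := by
    rw [multiplicityWeight]
    by_cases hy : y ∈ W
    · rcases lt_or_ge (W.count y) K with hK | hK
      · simp [hy, hK, hK.not_ge]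
      · simp [hy, hK, hK.not_gt, hz.le, mul_le_of_le_one_left, hx1]
    · simp [hy]
  have hpow {a : ℝ} (ha : 0 < a) (ha1 : a ≤ 1) {F : Finset α} {e : ℕ} (hF : #F ≤ e) :
      a ^ e ≤ ∏ y ∈ E, if y ∈ F then a else 1 := by
    rw [Finset.prod_ite, Finset.prod_const, Finset.prod_const_one, mul_one]
    refine pow_le_pow_of_le_one ha.le ha1 ((Finset.card_le_card fun y hy => ?_).trans hF)
    exact (Finset.mem_filter.1 hy).2
  calc x ^ d * z ^ T ≤ _ := mul_le_mul (hpow hx hx1 hd) (hpow hz hz1 hT) (by positivity)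
        (Finset.prod_nonneg fun y _ => by split_ifs <;> positivity)
    _ ≤ _ := by
        rw [← Finset.prod_mul_distrib]
        exact Finset.prod_le_prod (fun y _ => by split_ifs <;> positivity) fun y _ => hle y

lemma card_le_of_profile {B K M d T : ℕ} (hB : 0 < B)
    (hK : 0 < K) (hM : 0 < M) (hE : ∀ W ∈ 𝓜, ∀ y ∈ W, y ∈ E) (hcard : ∀ W ∈ 𝓜, W.card ≤ B)
    (hd : ∀ W ∈ 𝓜, #W.toFinset ≤ d) (hT : ∀ W ∈ 𝓜, #{y ∈ W.toFinset | K ≤ W.count y} ≤ T) :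
    (#𝓜 : ℝ) ≤ (K * M) ^ d * (B * M) ^ T * Real.exp (2 * #E / M) := by
  have hB' : (1 : ℝ) ≤ B := by exact_mod_cast hB
  have hK' : (1 : ℝ) ≤ K := by exact_mod_cast hK
  have hM' : (1 : ℝ) ≤ M := by exact_mod_cast hM
  set x : ℝ := (K * M : ℝ)⁻¹ with hx
  set z : ℝ := (B * M : ℝ)⁻¹ with hz
  have hw (m : ℕ) : 0 ≤ multiplicityWeight K x z m :=
    multiplicityWeight_nonneg (by positivity) (by positivity) m
  have hsum : ∑ m ∈ Finset.range (B + 1), multiplicityWeight K x z m ≤ 1 + 2 / M :=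
    (sum_multiplicityWeight_le (by positivity) (by positivity) B K).trans_eq (by
      rw [hx, hz]; field_simp; ring)
  have hrankin : #𝓜 * (x ^ d * z ^ T) ≤ (1 + 2 / M : ℝ) ^ #E :=
    (card_mul_le_sum_pow_card hw hE hcard fun W hW =>
      pow_mul_pow_le_prod_count (by positivity)
        (inv_le_one_of_one_le₀ (one_le_mul_of_one_le_of_one_le hK' hM')) (by positivity)
        (inv_le_one_of_one_le₀ (one_le_mul_of_one_le_of_one_le hB' hM')) (hd W hW) (hT W hW)).trans
      (pow_le_pow_left₀ (Finset.sum_nonneg fun m _ => hw m) hsum _)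
  have hexp : (1 + 2 / M : ℝ) ^ #E ≤ Real.exp (2 * #E / M) := by
    calc (1 + 2 / M : ℝ) ^ #E ≤ Real.exp (2 / M) ^ #E := by
          gcongr
          rw [add_comm]
          exact Real.add_one_le_exp _
      _ = Real.exp (2 * #E / M) := by rw [← Real.exp_nat_mul]; congr 1; ring
  calc (#𝓜 : ℝ) = (K * M) ^ d * (B * M) ^ T * (#𝓜 * (x ^ d * z ^ T)) := by
        rw [hx, hz, inv_pow, inv_pow]; field_simp
    _ ≤ _ := by gcongr; exact hrankin.trans hexp

end Profiles

section Counting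

lemma IsQuarterPart.mono {n : ℕ} {V W : Multiset ℕ} (hV : IsQuarterPart n V) (hWV : W ≤ V) :
    IsQuarterPart n W := by
  obtain ⟨hpos, P, Q, hPQ, hP, hVQ, hsum⟩ := hV
  have hWsum : W.sum ≤ V.sum := by
    obtain ⟨U, rfl⟩ := Multiset.le_iff_exists_add.1 hWV
    simp
  exact ⟨fun w hw => hpos w (Multiset.mem_of_le hWV hw), P, Q, hPQ, hP, hWV.trans hVQ, by lia⟩

section ContainerCount

variable {n j K M d T e : ℕ} {𝒱 : Finset (Multiset ℕ)}

lemma card_le_of_isQuarterPart_of_forall_mem {E : Finset ℕ} (hn : 0 < n) (hK : 0 < K) (hM : 0 < M)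
    (h𝒱 : ∀ V ∈ 𝒱, IsQuarterPart n V) (hE : ∀ V ∈ 𝒱, ∀ v ∈ V, v ∈ E)
    (hd : ∀ V, IsQuarterPart n V → #V.toFinset ≤ d)
    (hT : ∀ V, IsQuarterPart n V → #{v ∈ V.toFinset | K ≤ V.count v} ≤ T) (he : #E ≤ e) :
    (#𝒱 : ℝ) ≤ (K * M) ^ d * ((176 * n * (Nat.log 2 n + 5) : ℕ) * M) ^ T *
      Real.exp (2 * e / M) := by
  refine (card_le_of_profile (B := 176 * n * (Nat.log 2 n + 5)) (d := d) (T := T)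
    (by positivity) hK hM hE (fun V hV => (h𝒱 V hV).card_le) (fun V hV => hd V (h𝒱 V hV))
    fun V hV => hT V (h𝒱 V hV)).trans ?_
  gcongr

lemma card_le_of_isQuarterPart (hn : 0 < n) (hj : 32 * (Nat.log 2 n + 1) ≤ j) (hK : 0 < K)
    (hM : 0 < M) (h𝒱 : ∀ V ∈ 𝒱, IsQuarterPart n V)
    (hd : ∀ V, IsQuarterPart n V → #V.toFinset ≤ d)
    (hT : ∀ V, IsQuarterPart n V → #{v ∈ V.toFinset | K ≤ V.count v} ≤ T)
    (he : ∀ E ∈ containers n j, #E ≤ e) :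
    (#𝒱 : ℝ) ≤ (n + 1) ^ (j * (Nat.log 2 n + 5)) * (3 * n + 1) ^ (2 * j + 4) *
      ((K * M) ^ d * ((176 * n * (Nat.log 2 n + 5) : ℕ) * M) ^ T * Real.exp (2 * e / M)) := by
  set b := j * (Nat.log 2 n + 5)
  let 𝓜 (E : Finset ℕ) : Finset (Multiset ℕ) :=
    {W ∈ 𝒱.biUnion fun V => V.powerset.toFinset | ∀ w ∈ W, w ∈ E}
  have h𝓜 (E) (W) (hW : W ∈ 𝓜 E) : IsQuarterPart n W ∧ ∀ w ∈ W, w ∈ E := by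
    obtain ⟨⟨V, hV, hWV⟩, hWE⟩ : (∃ V ∈ 𝒱, W ≤ V) ∧ ∀ w ∈ W, w ∈ E := by simpa [𝓜] using hW
    exact ⟨(h𝒱 V hV).mono hWV, hWE⟩
  have hcover : 𝒱 ⊆ (boundedMultisets n b ×ˢ containers n j).biUnion
      fun p => (𝓜 p.2).image (p.1 + ·) := by
    intro V hV
    obtain ⟨Y, W, rfl, hY, E, hE, hW⟩ := (h𝒱 V hV).exists_container hj
    refine Finset.mem_biUnion.2 ⟨(Y, E), Finset.mem_product.2 ⟨mem_boundedMultisets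
      (fun y hy => (h𝒱 _ hV).1 y (Multiset.mem_add.2 (Or.inl hy))) hY, hE⟩,
      Finset.mem_image_of_mem _ ?_⟩
    exact Finset.mem_filter.2 ⟨Finset.mem_biUnion.2 ⟨_, hV, by simp⟩, hW⟩
  calc (#𝒱 : ℝ) ≤ ∑ p ∈ boundedMultisets n b ×ˢ containers n j, (#(𝓜 p.2) : ℝ) := by
        exact_mod_cast (Finset.card_le_card hcover).trans (Finset.card_biUnion_le.trans
          (Finset.sum_le_sum fun p _ => Finset.card_image_le))
    _ ≤ #(boundedMultisets n b ×ˢ containers n j) * _ := by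
        rw [← nsmul_eq_mul]
        exact Finset.sum_le_card_nsmul _ _ _ fun p hp =>
          card_le_of_isQuarterPart_of_forall_mem hn hK hM (fun W hW => (h𝓜 p.2 W hW).1)
            (fun W hW => (h𝓜 p.2 W hW).2) hd hT (he _ (Finset.mem_product.1 hp).2)
    _ ≤ _ := by
        rw [Finset.card_product, Nat.cast_mul]
        gcongr
        · exact_mod_cast card_boundedMultisets_le n b
        · exact_mod_cast card_containers_le hn j

end ContainerCount

lemma le_two_mul_mul_div {x y : ℕ} (hy : 0 < y) (hyx : y ≤ x) : x ≤ 2 * (y * (x / y)) := by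
  have hlt := Nat.lt_mul_div_succ x hy
  have hle := Nat.le_mul_of_pos_right y (Nat.div_pos hyx hy)
  rw [mul_add_one] at hlt
  lia

section Parameters

variable {n s r : ℕ} {V : Multiset ℕ}

lemma IsQuarterPart.card_toFinset_le (h : IsQuarterPart n V) (hr : 0 < r)
    (hlog : Nat.log 2 n + 5 ≤ 3 * r ^ 2) (hs : 32 * r * (Nat.log 2 n + 5) ≤ s)
    (hn : n ≤ 4 * s ^ 2) : #V.toFinset ≤ 1155 * s * r := by
  have hrs : r ≤ s := by nlinarith
  obtain ⟨e, he, hcount⟩ := h.exists_mul_card_filter_le_count (j := s / r)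
    ((Nat.le_div_iff_mul_le hr).2 (by nlinarith))
  have hV : #V.toFinset ≤ s / r * (Nat.log 2 n + 5) + e := by
    have hfilter : V.toFinset.filter (1 ≤ V.count ·) = V.toFinset :=
      Finset.filter_true_of_mem fun v hv =>
        Multiset.one_le_count_iff_mem.2 (Multiset.mem_toFinset.1 hv)
    simpa [hfilter] using hcount 1
  have hY : s / r * (Nat.log 2 n + 5) ≤ 3 * s * r := by
    calc s / r * (Nat.log 2 n + 5) ≤ s / r * (3 * r ^ 2) := Nat.mul_le_mul_left _ hlog
      _ = 3 * (s / r * r) * r := by ring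
      _ ≤ 3 * s * r := by gcongr; exact Nat.div_mul_le_self s r
  have hE : e ≤ 1152 * s * r := by
    refine Nat.le_of_mul_le_mul_right ?_ (hr.trans_le hrs)
    calc e * s ≤ e * (2 * (r * (s / r))) := Nat.mul_le_mul_left _ (le_two_mul_mul_div hr hrs)
      _ = 2 * r * (e * (s / r)) := by ring
      _ ≤ 2 * r * (144 * (4 * s ^ 2)) :=
          Nat.mul_le_mul_left _ (he.trans (Nat.mul_le_mul_left _ hn))
      _ = 1152 * s * r * s := by ring
  lia

lemma IsQuarterPart.card_filter_le_count_le (h : IsQuarterPart n V) (hr : 0 < r) (hs0 : 0 < s)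
    (hlog : Nat.log 2 n + 5 ≤ 3 * r ^ 2) (hs : 32 * (Nat.log 2 n + 5) ≤ s)
    (hn : n ≤ 4 * s ^ 2) : #{v ∈ V.toFinset | r ^ 4 ≤ V.count v} ≤ 579 * s / r := by
  obtain ⟨e, he, hcount⟩ := h.exists_mul_card_filter_le_count (j := s * r) (by nlinarith)
  have hE : e * r ≤ 576 * s := by
    refine Nat.le_of_mul_le_mul_right ?_ hs0
    calc e * r * s = e * (s * r) := by ring
      _ ≤ 144 * (4 * s ^ 2) := he.trans (Nat.mul_le_mul_left _ hn)
      _ = 576 * s * s := by ring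
  refine (Nat.le_div_iff_mul_le hr).2 (Nat.le_of_mul_le_mul_left ?_ (pow_pos hr 3))
  calc r ^ 3 * (_ * r) = r ^ 4 * #{v ∈ V.toFinset | r ^ 4 ≤ V.count v} := by ring
    _ ≤ s * r * (3 * r ^ 2) + r ^ 4 * e := (hcount _).trans (by gcongr)
    _ = r ^ 3 * (3 * s + e * r) := by ring
    _ ≤ r ^ 3 * (579 * s) := by gcongr; lia

lemma card_le_of_mem_containers_div {m : ℕ} {E : Finset ℕ} (hm : 0 < m) (hms : 2 * m ≤ s)
    (hn : n ≤ 4 * s ^ 2) (hE : E ∈ containers n (s / (2 * m))) : #E ≤ 2304 * s * m := by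
  refine Nat.le_of_mul_le_mul_right ?_ (by lia : 0 < s)
  calc #E * s ≤ #E * (2 * (2 * m * (s / (2 * m)))) :=
        Nat.mul_le_mul_left _ (le_two_mul_mul_div (by lia) hms)
    _ = 4 * m * (#E * (s / (2 * m))) := by ring
    _ ≤ 4 * m * (144 * (4 * s ^ 2)) :=
        Nat.mul_le_mul_left _
          ((card_mul_le_of_mem_containers hE).trans (Nat.mul_le_mul_left _ hn))
    _ = 2304 * s * m * s := by ring

end Parameters

section Asymptotics

lemma pow_le_exp {x y b : ℝ} {a : ℕ} (hx : 0 ≤ x) (hxy : x ≤ Real.exp y) (hb : a * y ≤ b) :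
    x ^ a ≤ Real.exp b :=
  calc x ^ a ≤ Real.exp y ^ a := pow_le_pow_left₀ hx hxy a
    _ = Real.exp (a * y) := (Real.exp_nat_mul y a).symm
    _ ≤ Real.exp b := Real.exp_le_exp.2 hb

lemma two_pow_le_exp (a : ℕ) : (2 : ℝ) ^ a ≤ Real.exp a :=
  pow_le_exp zero_le_two (by linarith [Real.add_one_le_exp 1]) (mul_one _).le

lemma natCast_le_exp_log_add_one (n : ℕ) : (n : ℝ) ≤ Real.exp (Nat.log 2 n + 1) := by
  have hlt : (n : ℝ) ≤ 2 ^ (Nat.log 2 n + 1) := by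
    exact_mod_cast (Nat.lt_pow_succ_log_self one_lt_two n).le
  simpa using hlt.trans (two_pow_le_exp _)

lemma natLog_le_two_mul_log {n : ℕ} (hn : n ≠ 0) : (Nat.log 2 n : ℝ) ≤ 2 * Real.log n := by
  have hpow : (2 : ℝ) ^ Nat.log 2 n ≤ n := by exact_mod_cast Nat.pow_log_le_self 2 hn
  have hlog := Real.log_le_log (by positivity) hpow
  rw [Real.log_pow] at hlog
  nlinarith [Real.log_two_gt_d9, (Nat.log 2 n).cast_nonneg (α := ℝ)]

section Factors

variable {n m s r : ℕ}

lemma fingerprint_count_le_exp (hn : 0 < n) :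
    ((n : ℝ) + 1) ^ (s / (2 * m) * m) ≤ Real.exp (s * (Real.log n + 1) / 2) := by
  have hn1 : (1 : ℝ) ≤ n := by exact_mod_cast hn
  have hexp : (n : ℝ) + 1 ≤ Real.exp (Real.log n + 1) := by
    rw [Real.exp_add, Real.exp_log (by linarith)]
    nlinarith [Real.add_one_le_exp 1]
  refine pow_le_exp (by positivity) hexp ?_
  have hs : ((s / (2 * m) * m : ℕ) : ℝ) ≤ s / 2 := by
    rw [le_div_iff₀ two_pos]
    exact_mod_cast (by rw [mul_assoc, mul_comm m]; exact Nat.div_mul_le_self s (2 * m))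
  calc _ ≤ (s / 2 : ℝ) * (Real.log n + 1) :=
        mul_le_mul_of_nonneg_right hs (by have := Real.log_nonneg hn1; linarith)
    _ = s * (Real.log n + 1) / 2 := by ring

lemma container_count_le_exp (hn : 0 < n) (hm : m = Nat.log 2 n + 5) (hs : 4 * m ≤ s) :
    (3 * (n : ℝ) + 1) ^ (2 * (s / (2 * m)) + 4) ≤ Real.exp (2 * s) := by
  have hn1 : (1 : ℝ) ≤ n := by exact_mod_cast hn
  have hexp : 3 * (n : ℝ) + 1 ≤ Real.exp m := by
    calc 3 * (n : ℝ) + 1 ≤ 2 ^ 2 * n := by linarith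
      _ ≤ Real.exp (2 : ℕ) * Real.exp (Nat.log 2 n + 1) :=
          mul_le_mul (two_pow_le_exp 2) (natCast_le_exp_log_add_one n) (by positivity)
            (by positivity)
      _ ≤ Real.exp m := by
          rw [← Real.exp_add, Real.exp_le_exp, hm]
          push_cast
          linarith
  refine pow_le_exp (by positivity) hexp ?_
  have := Nat.div_mul_le_self s (2 * m)
  exact_mod_cast (by lia : (2 * (s / (2 * m)) + 4) * m ≤ 2 * s)

lemma multiplicity_count_le_exp (hr : 0 < r) (hmr : m ≤ 3 * r ^ 2) :
    ((r ^ 4 : ℕ) * (m : ℝ)) ^ (1155 * s * r) ≤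
      Real.exp (s * (1155 * r * Real.log (3 * r ^ 6))) := by
  have hexp : (r ^ 4 : ℕ) * (m : ℝ) ≤ Real.exp (Real.log (3 * r ^ 6)) := by
    rw [Real.exp_log (by positivity)]
    calc ((r ^ 4 : ℕ) : ℝ) * m ≤ (r ^ 4 : ℕ) * (3 * r ^ 2) := by gcongr; exact_mod_cast hmr
      _ = 3 * r ^ 6 := by push_cast; ring
  exact pow_le_exp (by positivity) hexp (le_of_eq (by push_cast; ring))

lemma large_multiplicity_count_le_exp (hm : m = Nat.log 2 n + 5)
    (hmr : m ≤ 3 * r ^ 2) :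
    (((176 * n * m : ℕ) : ℝ) * m) ^ (579 * s / r) ≤ Real.exp (s * (6948 * r)) := by
  have hmexp : (m : ℝ) ≤ Real.exp m := by linarith [Real.add_one_le_exp (m : ℝ)]
  have hexp : ((176 * n * m : ℕ) : ℝ) * m ≤ Real.exp (4 * m) := by
    calc ((176 * n * m : ℕ) : ℝ) * m = 176 * n * (m * m) := by push_cast; ring
      _ ≤ 2 ^ 8 * n * (m * m) := by gcongr; norm_num
      _ ≤ Real.exp (8 : ℕ) * Real.exp (Nat.log 2 n + 1) * (Real.exp m * Real.exp m) := by
          gcongr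
          exacts [two_pow_le_exp 8, natCast_le_exp_log_add_one n]
      _ ≤ Real.exp (4 * m) := by
          simp only [← Real.exp_add, Real.exp_le_exp, hm]
          push_cast
          linarith [(Nat.log 2 n).cast_nonneg (α := ℝ)]
  refine pow_le_exp (by positivity) hexp ?_
  have hT : 579 * s / r * (4 * m) ≤ s * (6948 * r) := by
    calc 579 * s / r * (4 * m) ≤ 579 * s / r * (4 * (3 * r ^ 2)) := by gcongr
      _ = 579 * s / r * r * (12 * r) := by ring
      _ ≤ 579 * s * (12 * r) := Nat.mul_le_mul_right _ (Nat.div_mul_le_self _ _)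
      _ = s * (6948 * r) := by ring
  exact_mod_cast hT

end Factors

/-- The parameter `s` stands for `√n`, and `r` for the square root of `m`. -/
lemma card_le_exp_of_isQuarterPart {n m s r : ℕ} {𝒱 : Finset (Multiset ℕ)} (hn : 0 < n)
    (h𝒱 : ∀ V ∈ 𝒱, IsQuarterPart n V) (hm : m = Nat.log 2 n + 5) (hr : 0 < r) (hrm : r ≤ m)
    (hmr : m ≤ 3 * r ^ 2) (hms : 64 * m ^ 2 ≤ s) (hns : n ≤ 4 * s ^ 2) :
    (#𝒱 : ℝ) ≤ Real.exp (s * Real.log n / 2 +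
      s * (4611 + 6948 * r + 1155 * r * Real.log (3 * r ^ 6))) := by
  have hm0 : 0 < m := hr.trans_le hrm
  have hmm : m ≤ m ^ 2 := Nat.le_self_pow two_ne_zero m
  have hs0 : 0 < s := by lia
  have hexpE : Real.exp (2 * (2304 * s * m : ℕ) / m) = Real.exp (4608 * s) := by
    congr 1
    push_cast
    field_simp
    ring
  calc (#𝒱 : ℝ) ≤ (n + 1) ^ (s / (2 * m) * m) * (3 * n + 1) ^ (2 * (s / (2 * m)) + 4) *
        (((r ^ 4 : ℕ) * m) ^ (1155 * s * r) * ((176 * n * m : ℕ) * m) ^ (579 * s / r) *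
          Real.exp (2 * (2304 * s * m : ℕ) / m)) := by
        rw [hm] at hmr hms hrm hmm ⊢
        exact card_le_of_isQuarterPart hn ((Nat.le_div_iff_mul_le (by lia)).2 (by nlinarith))
          (pow_pos hr 4) (by lia) h𝒱
          (fun V hV => hV.card_toFinset_le hr hmr (by nlinarith) hns)
          (fun V hV => hV.card_filter_le_count_le hr hs0 hmr (by lia) hns)
          (fun E hE => card_le_of_mem_containers_div (by lia) (by lia) hns hE)
    _ ≤ Real.exp (s * (Real.log n + 1) / 2) * Real.exp (2 * s) *
        (Real.exp (s * (1155 * r * Real.log (3 * r ^ 6))) * Real.exp (s * (6948 * r)) *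
          Real.exp (4608 * s)) := by
        rw [hexpE]
        gcongr
        exacts [fingerprint_count_le_exp hn, container_count_le_exp hn hm (by lia),
          multiplicity_count_le_exp hr hmr, large_multiplicity_count_le_exp hm hmr]
    _ ≤ _ := by
        simp only [← Real.exp_add, Real.exp_le_exp]
        linarith [s.cast_nonneg (α := ℝ)]

open Filter

lemma eventually_error_le : ∀ᶠ r : ℕ in atTop,
    4611 + 6948 * (r : ℝ) + 1155 * r * Real.log (3 * r ^ 6) ≤ ((r : ℝ) ^ 2 - 5) / 8 := by
  have hlog := Real.isLittleO_log_id_atTop.bound (by norm_num : (0 : ℝ) < 1 / 110880)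
  filter_upwards [tendsto_natCast_atTop_atTop.eventually hlog, eventually_ge_atTop 200000]
    with r hr hr0
  have hr1 : (200000 : ℝ) ≤ r := by exact_mod_cast hr0
  have hlogr : Real.log r ≤ r / 110880 := by
    have := (Real.norm_of_nonneg (Real.log_nonneg (by linarith : (1 : ℝ) ≤ r))).ge.trans hr
    rwa [id, Real.norm_of_nonneg (by linarith), one_div_mul_eq_div] at this
  have hlog3 : Real.log 3 ≤ 2 := by linarith [Real.log_le_sub_one_of_pos (zero_lt_three (α := ℝ))]
  have hlog6 : Real.log (3 * r ^ 6) ≤ 2 + r / 18480 := by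
    rw [Real.log_mul three_ne_zero (by positivity), Real.log_pow]
    push_cast
    linarith
  have hmul := mul_le_mul_of_nonneg_left hlog6 (by linarith : (0 : ℝ) ≤ 1155 * r)
  nlinarith

lemma tendsto_natLog_add_five_atTop : Tendsto (fun n => Nat.log 2 n + 5) atTop atTop :=
  tendsto_atTop.2 fun b => (eventually_ge_atTop (2 ^ b)).mono fun _ hn =>
    (Nat.le_log_of_pow_le one_lt_two hn).trans (Nat.le_add_right _ 5)

lemma eventually_sq_natLog_le_sqrt :
    ∀ᶠ n : ℕ in atTop, 64 * (Nat.log 2 n + 5) ^ 2 ≤ Nat.sqrt n := by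
  have hpow : ∀ᶠ m : ℕ in atTop, (m : ℝ) ^ 4 / 2 ^ m ≤ 1 / 2 ^ 17 :=
    (tendsto_pow_const_div_const_pow_of_one_lt 4 one_lt_two).eventually_le_const (by positivity)
  filter_upwards [tendsto_natLog_add_five_atTop.eventually hpow, eventually_ne_atTop 0]
    with n hn hn0
  rw [div_le_div_iff₀ (by positivity) (by positivity), one_mul] at hn
  have hle : (Nat.log 2 n + 5) ^ 4 * 2 ^ 17 ≤ 2 ^ (Nat.log 2 n + 5) := by exact_mod_cast hn
  rw [Nat.le_sqrt']
  calc (64 * (Nat.log 2 n + 5) ^ 2) ^ 2 ≤ 2 ^ Nat.log 2 n := by rw [pow_add] at hle; lia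
    _ ≤ n := Nat.pow_log_le_self 2 hn0

theorem eventually_card_quarterParts_le : ∀ᶠ n : ℕ in atTop, ∀ 𝒱 : Finset (Multiset ℕ),
    (∀ V ∈ 𝒱, IsQuarterPart n V) → (#𝒱 : ℝ) ≤ Real.exp (3 / 4 * √n * Real.log n) := by
  have hsqrt_atTop : Tendsto Nat.sqrt atTop atTop :=
    tendsto_atTop.2 fun b => (eventually_ge_atTop (b ^ 2)).mono fun n hn => Nat.le_sqrt'.2 hn
  filter_upwards [(hsqrt_atTop.comp tendsto_natLog_add_five_atTop).eventually eventually_error_le,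
    eventually_sq_natLog_le_sqrt, eventually_gt_atTop 0] with n herror hms hn 𝒱 h𝒱
  set m := Nat.log 2 n + 5 with hm
  have hrm : Nat.sqrt m ^ 2 ≤ m := Nat.sqrt_le' m
  have hr : 0 < Nat.sqrt m := Nat.sqrt_pos.2 (by lia)
  have hmr : m < (Nat.sqrt m + 1) ^ 2 := Nat.lt_succ_sqrt' m
  have hns : n < (Nat.sqrt n + 1) ^ 2 := Nat.lt_succ_sqrt' n
  have hs0 : 0 < Nat.sqrt n := Nat.sqrt_pos.2 hn
  refine (card_le_exp_of_isQuarterPart hn h𝒱 hm hr (Nat.sqrt_le_self m) (by nlinarith) hms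
    (by nlinarith)).trans (Real.exp_le_exp.2 ?_)
  have hrlog : ((Nat.sqrt m : ℝ) ^ 2 - 5) / 8 ≤ Real.log n / 4 := by
    have hrm' : (Nat.sqrt m : ℝ) ^ 2 ≤ Nat.log 2 n + 5 := by exact_mod_cast hrm
    linarith [natLog_le_two_mul_log hn.ne']
  calc _ ≤ Nat.sqrt n * Real.log n / 2 + Nat.sqrt n * (Real.log n / 4) := by
        gcongr
        exact herror.trans hrlog
    _ = 3 / 4 * Nat.sqrt n * Real.log n := by ring
    _ ≤ 3 / 4 * √n * Real.log n := by
        gcongr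
        exact Real.nat_sqrt_le_real_sqrt

end Asymptotics

end Counting

section PrimitiveIdentities

open Filter

lemma card_le_pow_two_mul {M : Type*} [AddCommMonoid M] {m : ℕ} {𝓐 : Finset (M × M)}
    {𝒱 : Finset M} (hfst : ∀ A ∈ 𝓐, ∃ V : Fin m → M, (∀ i, V i ∈ 𝒱) ∧ ∑ i, V i = A.1)
    (hsnd : ∀ A ∈ 𝓐, ∃ V : Fin m → M, (∀ i, V i ∈ 𝒱) ∧ ∑ i, V i = A.2) :
    #𝓐 ≤ #𝒱 ^ (2 * m) := by
  classical
  let 𝓢 : Finset M := (Fintype.piFinset fun _ : Fin m => 𝒱).image fun V => ∑ i, V i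
  have h𝓢 : #𝓢 ≤ #𝒱 ^ m := Finset.card_image_le.trans (by simp)
  have hsub : 𝓐 ⊆ 𝓢 ×ˢ 𝓢 := fun A hA => by
    obtain ⟨V, hV, hV'⟩ := hfst A hA
    obtain ⟨W, hW, hW'⟩ := hsnd A hA
    exact Finset.mem_product.2 ⟨Finset.mem_image.2 ⟨V, Fintype.mem_piFinset.2 hV, hV'⟩,
      Finset.mem_image.2 ⟨W, Fintype.mem_piFinset.2 hW, hW'⟩⟩
  calc #𝓐 ≤ #𝓢 * #𝓢 := (Finset.card_le_card hsub).trans (Finset.card_product _ _).le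
    _ ≤ #𝒱 ^ m * #𝒱 ^ m := Nat.mul_le_mul h𝓢 h𝓢
    _ = #𝒱 ^ (2 * m) := by ring

theorem eventually_card_primitiveIdentities_le :
    ∀ᶠ n : ℕ in atTop, ∀ 𝓐 : Finset (Multiset ℕ × Multiset ℕ),
      (∀ A ∈ 𝓐, IsPrimitiveIdentity A.1 A.2 ∧ (∀ a ∈ A.1, 0 < a ∧ a ≤ n) ∧
        ∀ a ∈ A.2, 0 < a ∧ a ≤ n) →
      (#𝓐 : ℝ) ≤ Real.exp (6 * √n * Real.log n) := by
  classical
  filter_upwards [eventually_card_quarterParts_le] with n hn 𝓐 h𝓐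
  let 𝒱 := {V ∈ boundedMultisets n (176 * n * (Nat.log 2 n + 5)) | IsQuarterPart n V}
  have mem_𝒱 {V : Multiset ℕ} (hV : IsQuarterPart n V) : V ∈ 𝒱 :=
    Finset.mem_filter.2 ⟨mem_boundedMultisets hV.1 hV.card_le, hV⟩
  have hquarters {P Q : Multiset ℕ} (h : IsPrimitiveIdentity P Q) (hP : ∀ p ∈ P, 0 < p ∧ p ≤ n)
      (hQ : ∀ q ∈ Q, 0 < q ∧ q ≤ n) :
      ∃ V : Fin 4 → Multiset ℕ, (∀ i, V i ∈ 𝒱) ∧ ∑ i, V i = Q := by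
    obtain ⟨V, hV, hsum⟩ := h.exists_quarters (fun p hp => (hP p hp).2) hQ
    exact ⟨V, fun i => mem_𝒱 (hV i), hsum⟩
  have hcard : #𝓐 ≤ #𝒱 ^ 8 := card_le_pow_two_mul
    (fun A hA => hquarters (h𝓐 A hA).1.symm (h𝓐 A hA).2.2 (h𝓐 A hA).2.1)
    (fun A hA => hquarters (h𝓐 A hA).1 (h𝓐 A hA).2.1 (h𝓐 A hA).2.2)
  calc (#𝓐 : ℝ) ≤ (#𝒱 : ℝ) ^ 8 := by exact_mod_cast hcard
    _ ≤ Real.exp (3 / 4 * √n * Real.log n) ^ 8 := by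
        gcongr
        exact hn 𝒱 fun V hV => (Finset.mem_filter.1 hV).2
    _ = Real.exp (6 * √n * Real.log n) := by
        rw [← Real.exp_nat_mul]
        push_cast
        ring_nf

end PrimitiveIdentities

section TorusInvariants

/-- The exponents of the weight-zero monomials that are not products of two nontrivial weight-zero
monomials. -/
def IsIndecomposable {ι : Type*} (w : ι → ℤ) (f : ι →₀ ℕ) : Prop :=
  Minimal (fun g => g ≠ 0 ∧ Finsupp.weight w g = 0) f

variable {ι : Type}

lemma torusAct_monomial (w : ι → ℤ) (t : kˣ) (f : ι →₀ ℕ) (a : k) :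
    torusAct k w t (monomial f a) = monomial f (((t ^ Finsupp.weight w f : kˣ) : k) * a) := by
  have hscalar : f.prod (fun i m => ((t ^ w i : kˣ) : k) ^ m) =
      ((t ^ Finsupp.weight w f : kˣ) : k) := by
    rw [Finsupp.weight_apply, Finsupp.sum, Finsupp.prod]
    induction f.support using Finset.cons_induction with
    | empty => simp
    | cons i s hi ih =>
      rw [Finset.prod_cons, Finset.sum_cons, ih, zpow_add, nsmul_eq_mul, mul_comm (f i : ℤ),
        zpow_mul]
      simp
  rw [torusAct, aeval_monomial, monomial_eq, ← hscalar, algebraMap_eq, map_mul, map_finsuppProd]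
  simp only [smul_eq_C_mul, mul_pow, Finsupp.prod_mul, map_pow]
  ring

lemma coeff_torusAct (w : ι → ℤ) (t : kˣ) (p : MvPolynomial ι k) (f : ι →₀ ℕ) :
    coeff f (torusAct k w t p) = ((t ^ Finsupp.weight w f : kˣ) : k) * coeff f p := by
  classical
  induction p using MvPolynomial.induction_on' with
  | monomial g a =>
    rw [torusAct_monomial, coeff_monomial, coeff_monomial]
    split_ifs with h
    · rw [h]
    · rw [mul_zero]
  | add p q hp hq => rw [map_add, coeff_add, hp, hq, coeff_add, mul_add]

lemma exists_units_zpow_ne_one [Infinite k] {z : ℤ} (hz : z ≠ 0) : ∃ t : kˣ, t ^ z ≠ 1 := by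
  obtain ⟨x, hx⟩ : ∃ x : k, x * (x ^ z.natAbs - 1) ≠ 0 := by
    by_contra! h
    have hpoly : (Polynomial.X * (Polynomial.X ^ z.natAbs - Polynomial.C 1) : Polynomial k) = 0 :=
      Polynomial.funext fun x => by simpa using h x
    exact mul_ne_zero Polynomial.X_ne_zero
      (Polynomial.X_pow_sub_C_ne_zero (Int.natAbs_pos.2 hz) 1) hpoly
  refine ⟨Units.mk0 x (left_ne_zero_of_mul hx), fun ht => right_ne_zero_of_mul hx ?_⟩
  rw [sub_eq_zero]
  simpa using congrArg Units.val (pow_natAbs_eq_one.2 ht)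

lemma weight_eq_zero_of_mem_torusInv [Infinite k] {w : ι → ℤ} {p : MvPolynomial ι k}
    (hp : p ∈ torusInv k w) {f : ι →₀ ℕ} (hf : f ∈ p.support) : Finsupp.weight w f = 0 := by
  by_contra hw
  obtain ⟨t, ht⟩ := exists_units_zpow_ne_one k hw
  have hcoeff := coeff_torusAct k w t p f
  rw [hp t] at hcoeff
  exact ht (Units.ext ((mul_eq_right₀ (mem_support_iff.1 hf)).1 hcoeff.symm))

lemma monomial_mem_adjoin_of_weight_eq_zero {w : ι → ℤ} {f : ι →₀ ℕ}
    (hf : Finsupp.weight w f = 0) :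
    monomial f (1 : k) ∈ Algebra.adjoin k ((monomial · (1 : k)) '' {f | IsIndecomposable w f}) := by
  induction f using WellFoundedLT.induction with
  | ind f ih =>
    rcases eq_or_ne f 0 with rfl | h0
    · exact one_mem _
    obtain ⟨g, hgf, hg⟩ := exists_minimal_le_of_wellFoundedLT
      (fun g => g ≠ 0 ∧ Finsupp.weight w g = 0) f ⟨h0, hf⟩
    obtain ⟨h, rfl⟩ := exists_add_of_le hgf
    have hlt : h < g + h := lt_add_of_pos_left h (pos_iff_ne_zero.2 hg.1.1)
    rw [map_add, hg.1.2, zero_add] at hf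
    have hmul : monomial (g + h) (1 : k) = monomial g 1 * monomial h 1 := by
      rw [monomial_mul, mul_one]
    rw [hmul]
    exact mul_mem (Algebra.subset_adjoin ⟨g, hg, rfl⟩) (ih h hlt hf)

lemma adjoin_indecomposable_eq_torusInv [Infinite k] (w : ι → ℤ) :
    Algebra.adjoin k ((monomial · (1 : k)) '' {f | IsIndecomposable w f}) = torusInv k w := by
  refine le_antisymm (Algebra.adjoin_le ?_) fun p hp => ?_
  · rintro _ ⟨f, hf, rfl⟩ t
    simp [torusAct_monomial, hf.1.2]
  · rw [p.as_sum]
    refine sum_mem fun f hf => ?_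
    rw [← mul_one (coeff f p), ← smul_eq_mul, ← smul_monomial]
    exact Subalgebra.smul_mem _
      (monomial_mem_adjoin_of_weight_eq_zero k (weight_eq_zero_of_mem_torusInv k hp hf)) _

lemma minGens_torusInv_le [Infinite k] {w : ι → ℤ} {𝓕 : Finset (ι →₀ ℕ)}
    (h𝓕 : ∀ f, f ∈ 𝓕 ↔ IsIndecomposable w f) : minGens k (torusInv k w) ≤ #𝓕 := by
  classical
  refine le_trans (Nat.sInf_le ⟨𝓕.image (monomial · (1 : k)), rfl, ?_⟩) Finset.card_image_le
  rw [← adjoin_indecomposable_eq_torusInv, Finset.coe_image]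
  congr 2
  ext f
  exact h𝓕 f

end TorusInvariants

section PositiveWeights

variable {ι : Type*} {w : ι → ℤ} {f g : ι →₀ ℕ}

/-- The weights of the variables of positive weight that occur in the monomial with exponent `f`,
with multiplicity. -/
noncomputable def positiveWeights (w : ι → ℤ) (f : ι →₀ ℕ) : Multiset ℕ :=
  ((Finsupp.toMultiset f).filter (0 < w ·)).map fun i => (w i).toNat

lemma positiveWeights_add (w : ι → ℤ) (f g : ι →₀ ℕ) :
    positiveWeights w (f + g) = positiveWeights w f + positiveWeights w g := by
  simp [positiveWeights]

lemma cast_sum_positiveWeights_sub (w : ι → ℤ) (f : ι →₀ ℕ) :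
    ((positiveWeights w f).sum : ℤ) - (positiveWeights (-w) f).sum = Finsupp.weight w f := by
  induction f using Finsupp.induction_linear with
  | zero => simp [positiveWeights]
  | add f g hf hg =>
    simp only [positiveWeights_add, Multiset.sum_add, Nat.cast_add, map_add, ← hf, ← hg]
    ring
  | single i c =>
    have hsingle (v : ι → ℤ) :
        ((positiveWeights v (Finsupp.single i c)).sum : ℤ) = c * max (v i) 0 := by
      by_cases h : 0 < v i
      · simp [positiveWeights, Multiset.filter_nsmul, Multiset.filter_singleton, h,
          Multiset.map_nsmul, Multiset.sum_nsmul]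
      · simp [positiveWeights, Multiset.filter_nsmul, Multiset.filter_singleton, h, not_lt.1 h]
    rw [hsingle, hsingle, Finsupp.weight_single, nsmul_eq_mul, ← mul_sub, Pi.neg_apply,
      max_zero_sub_eq_self]

lemma exists_le_positiveWeights_eq {P Q : Multiset ℕ} (hP : P ≤ positiveWeights w f)
    (hQ : Q ≤ positiveWeights (-w) f) :
    ∃ g ≤ f, positiveWeights w g = P ∧ positiveWeights (-w) g = Q := by
  classical
  obtain ⟨G, hG, rfl⟩ := exists_le_map_eq _ hP
  obtain ⟨H, hH, rfl⟩ := exists_le_map_eq _ hQ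
  have hGpos : ∀ i ∈ G, 0 < w i := fun i hi => (Multiset.mem_filter.1 (Multiset.mem_of_le hG hi)).2
  have hHneg : ∀ i ∈ H, 0 < (-w) i := fun i hi =>
    (Multiset.mem_filter.1 (Multiset.mem_of_le hH hi)).2
  have hle : G + H ≤ Finsupp.toMultiset f := by
    rw [← Multiset.filter_add_not (0 < w ·) (Finsupp.toMultiset f)]
    exact add_le_add hG (hH.trans (Multiset.monotone_filter_right _ fun i hi => by
      simp only [Pi.neg_apply] at hi; lia))
  refine ⟨Multiset.toFinsupp (G + H), ?_, ?_, ?_⟩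
  · rw [← Finsupp.toMultiset_toFinsupp f]
    exact Multiset.toFinsupp_strictMono.monotone hle
  · rw [positiveWeights, Multiset.toFinsupp_toMultiset, Multiset.filter_add,
      Multiset.filter_eq_self.2 hGpos, Multiset.filter_eq_nil.2 fun i hi => ?_, add_zero]
    exact not_lt.2 (neg_pos.1 (hHneg i hi)).le
  · rw [positiveWeights, Multiset.toFinsupp_toMultiset, Multiset.filter_add,
      Multiset.filter_eq_self.2 hHneg, Multiset.filter_eq_nil.2 fun i hi => ?_, zero_add]
    exact not_lt.2 (neg_neg_iff_pos.2 (hGpos i hi)).le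

lemma IsIndecomposable.isPrimitiveIdentity (hf : IsIndecomposable w f) :
    IsPrimitiveIdentity (positiveWeights w f) (positiveWeights (-w) f) := by
  have hsum := cast_sum_positiveWeights_sub w
  refine ⟨by have := hsum f; rw [hf.1.2] at this; lia, fun P hP Q hQ heq => ?_⟩
  obtain ⟨g, hgf, rfl, rfl⟩ := exists_le_positiveWeights_eq hP hQ
  rcases eq_or_ne g 0 with rfl | hg0
  · exact Or.inl ⟨rfl, rfl⟩
  · have hg : Finsupp.weight w g = 0 := by rw [← hsum g, heq, sub_self]
    rw [hgf.antisymm (hf.2 ⟨hg0, hg⟩ hgf)]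
    exact Or.inr ⟨rfl, rfl⟩

lemma count_positiveWeights (hw : Function.Injective w) {i : ι} (hi : 0 < w i) :
    (positiveWeights w f).count (w i).toNat = f i := by
  classical
  rw [positiveWeights, Multiset.count_map, Multiset.filter_filter, ← Finsupp.count_toMultiset,
    Multiset.count_eq_card_filter_eq]
  refine congrArg _ (Multiset.filter_congr fun j _ => ⟨fun h => hw (by lia), ?_⟩)
  rintro rfl
  exact ⟨rfl, hi⟩

lemma IsIndecomposable.eq_of_positiveWeights_eq (hw : Function.Injective w)
    (hf : IsIndecomposable w f) (hg : IsIndecomposable w g)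
    (hpos : positiveWeights w f = positiveWeights w g)
    (hneg : positiveWeights (-w) f = positiveWeights (-w) g) : f = g := by
  have heq (i) (hi : w i ≠ 0) : f i = g i := by
    rcases hi.lt_or_gt with h | h
    · have hi' : 0 < (-w) i := by simpa using h
      have hw' : Function.Injective (-w) := neg_injective.comp hw
      rw [← count_positiveWeights hw' hi', hneg, count_positiveWeights hw' hi']
    · rw [← count_positiveWeights hw h, hpos, count_positiveWeights hw h]
  by_cases hfg : f ≤ g
  · exact hfg.antisymm (hg.2 hf.1 hfg)
  obtain ⟨i, hi⟩ : ∃ i, g i < f i := by simpa [Finsupp.le_def] using hfg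
  have hwi : w i = 0 := by
    by_contra h
    exact hi.ne' (heq i h)
  have hgf : g ≤ f := fun j => by
    by_cases hwj : w j = 0
    · rw [hw (hwj.trans hwi.symm)]
      exact hi.le
    · exact (heq j hwj).ge
  exact (hf.2 hg.1 hgf).antisymm hgf

lemma pos_and_le_of_mem_positiveWeights {n : ℕ} (hw : ∀ i, |w i| ≤ n) :
    ∀ v ∈ positiveWeights w f, 0 < v ∧ v ≤ n := by
  intro v hv
  obtain ⟨i, hi, rfl⟩ := Multiset.mem_map.1 hv
  have hpos := (Multiset.mem_filter.1 hi).2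
  have hle := (le_abs_self _).trans (hw i)
  lia

end PositiveWeights

section BinaryForms

open Filter

lemma eventually_card_indecomposables_le : ∀ᶠ n : ℕ in atTop, ∀ {ι : Type*} {w : ι → ℤ},
    Function.Injective w → (∀ i, |w i| ≤ n) → ∀ 𝓕 : Finset (ι →₀ ℕ),
      (∀ f ∈ 𝓕, IsIndecomposable w f) → (#𝓕 : ℝ) ≤ Real.exp (6 * √n * Real.log n) := by
  filter_upwards [eventually_card_primitiveIdentities_le] with n hn ι w hw hwn 𝓕 h𝓕
  have hinj : Set.InjOn (fun f => (positiveWeights w f, positiveWeights (-w) f)) 𝓕 :=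
    fun f hf g hg heq => (h𝓕 f hf).eq_of_positiveWeights_eq hw (h𝓕 g hg)
      (Prod.ext_iff.1 heq).1 (Prod.ext_iff.1 heq).2
  rw [← Finset.card_image_of_injOn hinj]
  refine hn _ (Finset.forall_mem_image.2 fun f hf => ⟨(h𝓕 f hf).isPrimitiveIdentity,
    pos_and_le_of_mem_positiveWeights hwn, pos_and_le_of_mem_positiveWeights fun i => ?_⟩)
  rw [Pi.neg_apply, abs_neg]
  exact hwn i

theorem eventually_minGens_torusInv_le [Infinite k] : ∀ᶠ n : ℕ in atTop,
    ∀ {ι : Type} {w : ι → ℤ}, Function.Injective w → (∀ i, |w i| ≤ n) →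
      (minGens k (torusInv k w) : ℝ) ≤ Real.exp (6 * √n * Real.log n) := by
  filter_upwards [eventually_card_indecomposables_le] with n hn ι w hw hwn
  have hfin : {f | IsIndecomposable w f}.Finite := by
    by_contra hinf
    obtain ⟨𝓕, h𝓕, hcard⟩ := Set.Infinite.exists_subset_card_eq hinf
      (⌊Real.exp (6 * √n * Real.log n)⌋₊ + 1)
    have hlt := Nat.lt_floor_add_one (Real.exp (6 * √n * Real.log n))
    have hle := hn hw hwn 𝓕 h𝓕
    rw [hcard] at hle
    push_cast at hle
    exact hlt.not_ge hle
  calc (minGens k (torusInv k w) : ℝ) ≤ #hfin.toFinset := by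
        exact_mod_cast minGens_torusInv_le k fun f => hfin.mem_toFinset
    _ ≤ Real.exp (6 * √n * Real.log n) := hn hw hwn _ fun f hf => hfin.mem_toFinset.1 hf

lemma wBin_injective (n : ℕ) : Function.Injective (wBin n) := fun i j hij => by
  simp only [wBin] at hij
  omega

lemma abs_wBin_le {n : ℕ} (j : Fin (n + 1)) : |wBin n j| ≤ n := by
  simp only [wBin, abs_le]
  omega

theorem exists_minGens_torusInv_wBin_le [Infinite k] : ∃ C > 0, ∀ n : ℕ,
    (minGens k (torusInv k (wBin n)) : ℝ) ≤ C * Real.exp (6 * √n * Real.log n) := by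
  have hO : (fun n => (minGens k (torusInv k (wBin n)) : ℝ)) =O[atTop]
      fun n : ℕ => Real.exp (6 * √n * Real.log n) :=
    .of_bound 1 ((eventually_minGens_torusInv_le k).mono fun n hn => by
      simpa using hn (wBin_injective n) abs_wBin_le)
  obtain ⟨C, hC, hle⟩ := Asymptotics.bound_of_isBigO_nat_atTop hO
  exact ⟨C, hC, fun n => by simpa using @hle n (Real.exp_ne_zero _)⟩

theorem binary_forms_torus_invariants_minGens_bound_general [Infinite k] :
    (∃ C : ℝ, ∀ n : ℕ, 1 ≤ n → Odd n →
      (minGens k (torusInv k (wBin n)) : ℝ) ≤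
        C * n * Real.exp (6 * Real.sqrt n * Real.log (2 * n))) ∧
    (∃ C : ℝ, ∀ n : ℕ, 1 ≤ n → Even n →
      (minGens k (torusInv k (wBin n)) : ℝ) ≤
        C * n * Real.exp (12 * Real.sqrt ((n : ℝ) / 2) * Real.log n)) := by
  obtain ⟨C, hC, hbound⟩ := exists_minGens_torusInv_wBin_le k
  have hbound' {n : ℕ} (hn : 1 ≤ n) {x : ℝ} (hx : 6 * √n * Real.log n ≤ x) :
      (minGens k (torusInv k (wBin n)) : ℝ) ≤ C * n * Real.exp x := by
    have hn1 : (1 : ℝ) ≤ n := by exact_mod_cast hn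
    exact (hbound n).trans (mul_le_mul (le_mul_of_one_le_right hC.le hn1) (Real.exp_le_exp.2 hx)
      (Real.exp_nonneg _) (by positivity))
  refine ⟨⟨C, fun n hn _ => hbound' hn ?_⟩, ⟨C, fun n hn _ => hbound' hn ?_⟩⟩
  · gcongr
    linarith
  · have hsqrt : √(n : ℝ) ≤ 2 * √((n : ℝ) / 2) :=
      Real.sqrt_le_iff.2 ⟨by positivity, by rw [mul_pow, Real.sq_sqrt (by positivity)]; linarith⟩
    exact mul_le_mul_of_nonneg_right (by linarith) (Real.log_natCast_nonneg n)

end BinaryForms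

/-- Let `T` be the diagonal maximal torus of `SL₂` acting on the space `V_n` of binary
forms of degree `n` over a field of characteristic 0 (the coordinate `a_i` having
`T`-weight `i ∈ {-n, -n+2, …, n}`).  Then the cardinality of a minimal generating set of
`k[V_n]^T` is `O(n·e^{6√n log 2n})` for odd `n` and `O(n·e^{12√(n/2) log n})` for
even `n`. -/
theorem binary_forms_torus_invariants_minGens_bound [IsAlgClosed k] [CharZero k] :
    (∃ C : ℝ, ∀ n : ℕ, 1 ≤ n → Odd n →
      (minGens k (torusInv k (wBin n)) : ℝ) ≤
        C * n * Real.exp (6 * Real.sqrt n * Real.log (2 * n))) ∧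
    (∃ C : ℝ, ∀ n : ℕ, 1 ≤ n → Even n →
      (minGens k (torusInv k (wBin n)) : ℝ) ≤
        C * n * Real.exp (12 * Real.sqrt ((n : ℝ) / 2) * Real.log n)) :=
  binary_forms_torus_invariants_minGens_bound_general k
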